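/- arXiv:0712.2559 — 2 statements merged into one kernel-verified Lean document; each statement's English description precedes it below -/
import Mathlib

section
/- Let (A(n))_{n∈ℤ} be a sequence of i.i.d. random d×d matrices with entries in ℝ_max, almost surely having at least one finite entry on each row, such that A(0)⊗0 is integrable (i.e. each coordinate max_j A_{ij}(0) is integrable). Then the almost-sure limit of (1/n)·y(n,0) (which exists) is deterministic if and only if for every strongly connected component c of 𝒢(A), the submatrix A^{{c}} of A(0) indexed by H_c almost surely has at least one finite entry on each row. -/
open Filter MeasureTheory ProbabilityTheory Topology

noncomputable section

/-- Max-plus action of a `d × d` matrix over `ℝ_max = ℝ ∪ {-∞}` (encoded as `EReal`,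
with `⊤` never used) on a vector: `(A ⊗ v) i = max_j (A i j + v j)`. -/
def mpVec {d : ℕ} (A : Fin d → Fin d → EReal) (v : Fin d → EReal) : Fin d → EReal :=
  fun i => ⨆ j, A i j + v j

/-- `appProd n f v = f 0 ⊗ f 1 ⊗ ⋯ ⊗ f (n-1) ⊗ v` in the max-plus algebra. -/
def appProd {d : ℕ} : ℕ → (ℕ → Fin d → Fin d → EReal) → (Fin d → EReal) → Fin d → EReal
  | 0, _, v => v
  | n + 1, f, v => mpVec (f 0) (appProd n (fun k => f (k + 1)) v)

/-- `xvec f n = f (n-1) ⊗ ⋯ ⊗ f 0 ⊗ 0`; with `f m = A(m)` this is `x(n, 0)`. -/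
def xvec {d : ℕ} (f : ℕ → Fin d → Fin d → EReal) : ℕ → Fin d → EReal
  | 0 => fun _ => 0
  | n + 1 => mpVec (f n) (xvec f n)

/-- `lvec n f = f 0 ⊗ f 1 ⊗ ⋯ ⊗ f (n-1) ⊗ 0`; with `f k = A(-(k+1))` this is `y(n, 0)`. -/
def lvec {d : ℕ} (n : ℕ) (f : ℕ → Fin d → Fin d → EReal) : Fin d → EReal :=
  appProd n f (fun _ => 0)

/-- Multiplication of an extended real by `1/n`. -/
def mpScale (n : ℕ) (x : EReal) : EReal := (((n : ℝ)⁻¹ : ℝ) : EReal) * x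

open Classical in
/-- Restriction of a matrix to the indices in `c`: entries outside `c × c` are `-∞`. -/
def mpRestrict {d : ℕ} (c : Set (Fin d)) (M : Fin d → Fin d → EReal) : Fin d → Fin d → EReal :=
  fun i j => if i ∈ c ∧ j ∈ c then M i j else ⊥

/-- Arc relation of the graph `𝒢(A)` of a random matrix `A`:
`(i,j)` is an arc iff `A ω i j ≠ -∞` with positive probability. -/
def arcRel {Ω : Type*} [MeasurableSpace Ω] (μ : Measure Ω) {d : ℕ}
    (A : Ω → Fin d → Fin d → EReal) (i j : Fin d) : Prop :=
  μ {ω | A ω i j ≠ ⊥} ≠ 0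

/-- `c` is a strongly connected component of the graph with arc relation `r`
(the mutual-reachability class of some node; nodes on no circuit are alone in their class). -/
def IsSCC {d : ℕ} (r : Fin d → Fin d → Prop) (c : Set (Fin d)) : Prop :=
  ∃ i, c = {j | Relation.ReflTransGen r i j ∧ Relation.ReflTransGen r j i}

/-- `i → c` : the node `i` reaches the component `c`. -/
def nodeReach {d : ℕ} (r : Fin d → Fin d → Prop) (i : Fin d) (c : Set (Fin d)) : Prop :=
  ∃ j ∈ c, Relation.ReflTransGen r i j

/-- `c → c'` : the component `c` reaches the component `c'`. -/
def sccReach {d : ℕ} (r : Fin d → Fin d → Prop) (c c' : Set (Fin d)) : Prop :=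
  ∃ i ∈ c, nodeReach r i c'

/-- `γ^{[c]} = max { γ^{(c')} : c → c' }`, where `γ` assigns to each s.c.c. its
maximal Lyapunov exponent. -/
def gammaBrack {d : ℕ} (r : Fin d → Fin d → Prop) (γ : Set (Fin d) → EReal)
    (c : Set (Fin d)) : EReal :=
  ⨆ c', ⨆ (_ : IsSCC r c' ∧ sccReach r c c'), γ c'

/-- The set of nodes `H_c = {c}` : nodes `i` with `c → i → c̃` for some s.c.c. `c̃`
realizing `γ^{(c̃)} = γ^{[c]}`. -/
def Hset {d : ℕ} (r : Fin d → Fin d → Prop) (γ : Set (Fin d) → EReal)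
    (c : Set (Fin d)) : Set (Fin d) :=
  {i | ∃ ct, IsSCC r ct ∧ (∃ j ∈ c, Relation.ReflTransGen r j i) ∧ nodeReach r i ct ∧
    γ ct = gammaBrack r γ c}

/-- `max { γ^{(c)} : c s.c.c. with i → c }`. -/
def limFormula {d : ℕ} (r : Fin d → Fin d → Prop) (γ : Set (Fin d) → EReal) (i : Fin d) : EReal :=
  ⨆ c, ⨆ (_ : IsSCC r c ∧ nodeReach r i c), γ c

section Deterministic

variable {d : ℕ}

/-- The sequence `f` shifted to the left by `n`. -/
def shiftSeq {E : Type*} (n : ℕ) (f : ℕ → E) : ℕ → E := fun k => f (k + n)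

/-- The sequence of matrices obtained by restricting every term of `f` to the indices in `c`. -/
def restrictSeq (c : Set (Fin d)) (f : ℕ → Fin d → Fin d → EReal) : ℕ → Fin d → Fin d → EReal :=
  fun k => mpRestrict c (f k)

/-- A nonnegative real dominating every entry of a matrix over `ℝ_max`. -/
def entryBound (M : Fin d → Fin d → EReal) : ℝ := ∑ i, |(⨆ j, M i j).toReal|

lemma shiftSeq_zero {E : Type*} (f : ℕ → E) : shiftSeq 0 f = f := rfl

lemma shiftSeq_shiftSeq {E : Type*} (m n : ℕ) (f : ℕ → E) :
    shiftSeq m (shiftSeq n f) = shiftSeq (n + m) f := by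
  funext k
  simp only [shiftSeq]
  congr 1
  omega

lemma shiftSeq_restrictSeq (c : Set (Fin d)) (n : ℕ) (f : ℕ → Fin d → Fin d → EReal) :
    shiftSeq n (restrictSeq c f) = restrictSeq c (shiftSeq n f) := rfl

lemma entryBound_nonneg (M : Fin d → Fin d → EReal) : 0 ≤ entryBound M :=
  Finset.sum_nonneg fun _ _ => abs_nonneg _

lemma le_entryBound {M : Fin d → Fin d → EReal} (hM : ∀ i j, M i j ≠ ⊤) (i j : Fin d) :
    M i j ≤ (entryBound M : EReal) := by
  have hsup : (⨆ j, M i j) ≠ ⊤ := by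
    have : Nonempty (Fin d) := ⟨j⟩
    obtain ⟨j', hj'⟩ := exists_eq_ciSup_of_finite (f := fun j => M i j)
    rw [← hj']
    exact hM i j'
  calc M i j ≤ ⨆ j, M i j := le_iSup (fun j => M i j) j
    _ ≤ ((⨆ j, M i j).toReal : EReal) := EReal.le_coe_toReal hsup
    _ ≤ (entryBound M : EReal) := by
      refine EReal.coe_le_coe_iff.2 ((le_abs_self _).trans ?_)
      exact Finset.single_le_sum (f := fun i => |(⨆ j, M i j).toReal|)
        (fun _ _ => abs_nonneg _) (Finset.mem_univ i)

lemma mpRestrict_le (c : Set (Fin d)) (M : Fin d → Fin d → EReal) (i j : Fin d) :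
    mpRestrict c M i j ≤ M i j := by
  unfold mpRestrict
  split_ifs <;> simp

lemma mpVec_le_iff {A : Fin d → Fin d → EReal} {v : Fin d → EReal} {i : Fin d} {b : EReal} :
    mpVec A v i ≤ b ↔ ∀ j, A i j + v j ≤ b :=
  iSup_le_iff

lemma le_mpVec (A : Fin d → Fin d → EReal) (v : Fin d → EReal) (i j : Fin d) :
    A i j + v j ≤ mpVec A v i :=
  le_iSup (fun j => A i j + v j) j

lemma appProd_succ (n : ℕ) (f : ℕ → Fin d → Fin d → EReal) (v : Fin d → EReal) :
    appProd (n + 1) f v = mpVec (f 0) (appProd n (shiftSeq 1 f) v) := rfl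

lemma lvec_succ (n : ℕ) (f : ℕ → Fin d → Fin d → EReal) :
    lvec (n + 1) f = mpVec (f 0) (lvec n (shiftSeq 1 f)) := rfl

lemma lvec_zero (f : ℕ → Fin d → Fin d → EReal) (i : Fin d) : lvec 0 f i = 0 := rfl

lemma appProd_add (l m : ℕ) (f : ℕ → Fin d → Fin d → EReal) (v : Fin d → EReal) :
    appProd (l + m) f v = appProd l f (appProd m (shiftSeq l f) v) := by
  induction l generalizing f with
  | zero => simp [appProd, shiftSeq_zero]
  | succ l ih =>
    rw [Nat.succ_add, appProd_succ, appProd_succ, ih, shiftSeq_shiftSeq, Nat.add_comm 1 l]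

lemma appProd_mono {n : ℕ} {f g : ℕ → Fin d → Fin d → EReal} {v w : Fin d → EReal}
    (hfg : ∀ k i j, f k i j ≤ g k i j) (hvw : ∀ i, v i ≤ w i) (i : Fin d) :
    appProd n f v i ≤ appProd n g w i := by
  induction n generalizing f g i with
  | zero => exact hvw i
  | succ n ih =>
    rw [appProd_succ, appProd_succ, mpVec_le_iff]
    exact fun j => (add_le_add (hfg 0 i j) (ih (fun k => hfg (k + 1)) j)).trans (le_mpVec _ _ i j)

lemma lvec_restrictSeq_le (c : Set (Fin d)) (n : ℕ) (f : ℕ → Fin d → Fin d → EReal) (i : Fin d) :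
    lvec n (restrictSeq c f) i ≤ lvec n f i :=
  appProd_mono (fun k => mpRestrict_le c (f k)) (fun _ => le_rfl) i

lemma appProd_le_add {n : ℕ} {f : ℕ → Fin d → Fin d → EReal} {v w : Fin d → EReal} {r : EReal}
    (hvw : ∀ i, v i ≤ w i + r) (i : Fin d) : appProd n f v i ≤ appProd n f w i + r := by
  induction n generalizing f i with
  | zero => exact hvw i
  | succ n ih =>
    rw [appProd_succ, appProd_succ, mpVec_le_iff]
    intro j
    calc f 0 i j + appProd n (shiftSeq 1 f) v j
        ≤ f 0 i j + (appProd n (shiftSeq 1 f) w j + r) := by gcongr; exact ih j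
      _ = f 0 i j + appProd n (shiftSeq 1 f) w j + r := (add_assoc _ _ _).symm
      _ ≤ _ := by gcongr; exact le_mpVec _ _ i j

lemma appProd_le_sum {n : ℕ} {f : ℕ → Fin d → Fin d → EReal} {v : Fin d → EReal}
    {x : ℕ → ℝ} {V : ℝ} (hf : ∀ k i j, f k i j ≤ (x k : EReal)) (hv : ∀ i, v i ≤ (V : EReal))
    (i : Fin d) : appProd n f v i ≤ ((∑ k ∈ Finset.range n, x k + V : ℝ) : EReal) := by
  induction n generalizing f x i with
  | zero => simpa [appProd] using hv i
  | succ n ih =>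
    rw [appProd_succ, mpVec_le_iff]
    intro j
    refine (add_le_add (hf 0 i j) (ih (x := fun k => x (k + 1)) (fun k => hf (k + 1)) j)).trans ?_
    rw [← EReal.coe_add, EReal.coe_le_coe_iff, Finset.sum_range_succ']
    linarith

lemma lvec_le_sum {n : ℕ} {f : ℕ → Fin d → Fin d → EReal}
    {x : ℕ → ℝ} (hf : ∀ k i j, f k i j ≤ (x k : EReal))
    (i : Fin d) : lvec n f i ≤ ((∑ k ∈ Finset.range n, x k : ℝ) : EReal) := by
  simpa [lvec] using appProd_le_sum (n := n) (v := fun _ => 0) (V := 0) hf (fun _ => le_rfl) i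

lemma lvec_restrictSeq_eq_bot {c : Set (Fin d)} {n : ℕ} (hn : n ≠ 0)
    (f : ℕ → Fin d → Fin d → EReal) {i : Fin d} (hi : i ∉ c) :
    lvec n (restrictSeq c f) i = ⊥ := by
  obtain ⟨m, rfl⟩ := Nat.exists_eq_succ_of_ne_zero hn
  rw [lvec_succ, ← le_bot_iff, mpVec_le_iff]
  intro j
  simp [restrictSeq, mpRestrict, hi]

/-- Greedy decomposition of paths: if outside a set `bad` of times every node admits a cut of
length at most `N` with slope at most `a`, the growth of `lvec` is at most `a` up to the
contribution of bad times and of a final window of length `N`. -/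
lemma lvec_le_of_cuts {f : ℕ → Fin d → Fin d → EReal} {x : ℕ → ℝ} {a : ℝ} {N : ℕ}
    (hx : ∀ k, 0 ≤ x k) (hf : ∀ k i j, f k i j ≤ (x k : EReal)) (bad : Set ℕ)
    (hcut : ∀ k, k ∉ bad → ∀ i, ∃ l, 1 ≤ l ∧ l ≤ N ∧
      lvec l (shiftSeq k f) i ≤ ((a * l : ℝ) : EReal)) (n : ℕ) (i : Fin d) :
    lvec n f i ≤ ((a * n + ∑ k ∈ Finset.range n,
      (({k | k ∈ bad ∨ n ≤ k + N}).indicator (fun k => x k + |a|) k) : ℝ) : EReal) := by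
  set e : ℕ → ℝ := ({k | k ∈ bad ∨ n ≤ k + N}).indicator (fun k => x k + |a|) with he
  have he0 : ∀ k, 0 ≤ e k := fun k =>
    Set.indicator_nonneg (fun k _ => add_nonneg (hx k) (abs_nonneg a)) k
  have hsum : ∀ s t m : ℕ, s ≤ t → ∑ k ∈ Finset.Ico t m, e k ≤ ∑ k ∈ Finset.Ico s m, e k :=
    fun s t m hst => Finset.sum_le_sum_of_subset_of_nonneg
      (Finset.Ico_subset_Ico_left hst) fun k _ _ => he0 k
  have key : ∀ m ≤ n, ∀ i, lvec m (shiftSeq (n - m) f) i ≤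
      ((a * m + ∑ k ∈ Finset.Ico (n - m) n, e k : ℝ) : EReal) := by
    intro m
    induction m using Nat.strong_induction_on with
    | _ m ih =>
      intro hmn i
      rcases Nat.eq_zero_or_pos m with rfl | hm
      · simp [lvec_zero]
      by_cases hb : n - m ∈ bad
      · obtain ⟨m', rfl⟩ : ∃ m', m = m' + 1 := ⟨m - 1, by omega⟩
        rw [lvec_succ, mpVec_le_iff]
        intro j
        have h1 := ih m' (by omega) (by omega) j
        rw [shiftSeq_shiftSeq, show n - (m' + 1) + 1 = n - m' by omega]
        have h2 : shiftSeq (n - (m' + 1)) f 0 i j ≤ (x (n - (m' + 1)) : EReal) := by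
          simpa [shiftSeq] using hf (n - (m' + 1)) i j
        refine (add_le_add h2 h1).trans ?_
        rw [← EReal.coe_add, EReal.coe_le_coe_iff,
          Finset.sum_eq_sum_Ico_succ_bot (show n - (m' + 1) < n by omega),
          show n - (m' + 1) + 1 = n - m' by omega]
        have h3 : e (n - (m' + 1)) = x (n - (m' + 1)) + |a| :=
          Set.indicator_of_mem (show n - (m' + 1) ∈ {k | k ∈ bad ∨ n ≤ k + N} from Or.inl hb) _
        have := neg_abs_le a
        push_cast
        linarith
      · obtain ⟨l, hl1, hlN, hl⟩ := hcut _ hb i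
        rcases le_or_gt l m with hlm | hlm
        · have h1 := ih (m - l) (by omega) (by omega)
          have h2 : lvec m (shiftSeq (n - m) f) i ≤ lvec l (shiftSeq (n - m) f) i +
              ((a * (m - l : ℕ) + ∑ k ∈ Finset.Ico (n - (m - l)) n, e k : ℝ) : EReal) := by
            have h3 : lvec m (shiftSeq (n - m) f) = appProd l (shiftSeq (n - m) f)
                (lvec (m - l) (shiftSeq (n - (m - l)) f)) := by
              rw [lvec, lvec, show n - (m - l) = n - m + l by omega, ← shiftSeq_shiftSeq,
                ← appProd_add, show l + (m - l) = m by omega]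
            rw [h3]
            exact appProd_le_add (fun j => by rw [zero_add]; exact h1 j) i
          refine h2.trans ((add_le_add_left hl _).trans ?_)
          rw [← EReal.coe_add, EReal.coe_le_coe_iff]
          have h3 := hsum (n - m) (n - (m - l)) n (by omega)
          have h4 : ((m - l : ℕ) : ℝ) = m - l := by push_cast [hlm]; ring
          rw [h4]
          linarith
        · refine (lvec_le_sum (x := fun k => x (k + (n - m))) (fun k i j => hf _ i j) i).trans ?_
          rw [EReal.coe_le_coe_iff]
          have h1 : ∑ k ∈ Finset.Ico (n - m) n, e k =
              ∑ k ∈ Finset.range m, (x (k + (n - m)) + |a|) := by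
            rw [Finset.sum_Ico_eq_sum_range, show n - (n - m) = m by omega]
            refine Finset.sum_congr rfl fun k hk => ?_
            rw [Nat.add_comm]
            have hmem : k + (n - m) ∈ {k | k ∈ bad ∨ n ≤ k + N} := by
              refine Or.inr ?_
              omega
            exact Set.indicator_of_mem hmem _
          rw [h1, Finset.sum_add_distrib]
          have := neg_abs_le a
          have hm0 : (0 : ℝ) ≤ m := Nat.cast_nonneg m
          simp only [Finset.sum_const, Finset.card_range, nsmul_eq_mul]
          nlinarith
  have := key n le_rfl i
  rw [Nat.sub_self, shiftSeq_zero] at this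
  rwa [Finset.range_eq_Ico]

/-- The strongly connected component of `i`. -/
def sccOf (r : Fin d → Fin d → Prop) (i : Fin d) : Set (Fin d) :=
  {j | Relation.ReflTransGen r i j ∧ Relation.ReflTransGen r j i}

/-- The number of nodes reachable from `i`. -/
def reachCard (r : Fin d → Fin d → Prop) (i : Fin d) : ℕ :=
  Set.ncard {j | Relation.ReflTransGen r i j}

lemma isSCC_sccOf (r : Fin d → Fin d → Prop) (i : Fin d) : IsSCC r (sccOf r i) := ⟨i, rfl⟩

lemma mem_sccOf_self (r : Fin d → Fin d → Prop) (i : Fin d) : i ∈ sccOf r i := ⟨.refl, .refl⟩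

lemma reachCard_le (r : Fin d → Fin d → Prop) (i : Fin d) : reachCard r i ≤ d := by
  simpa [reachCard] using Set.ncard_le_card {j | Relation.ReflTransGen r i j}

lemma reachCard_le_of_reach {r : Fin d → Fin d → Prop} {i j : Fin d}
    (h : Relation.ReflTransGen r i j) : reachCard r j ≤ reachCard r i :=
  Set.ncard_le_ncard (fun _ hk => h.trans hk) (Set.toFinite _)

lemma reachCard_lt {r : Fin d → Fin d → Prop} {i j : Fin d}
    (h : Relation.ReflTransGen r i j) (h' : ¬ Relation.ReflTransGen r j i) :
    reachCard r j < reachCard r i :=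
  Set.ncard_lt_ncard ⟨fun _ hk => h.trans hk, fun hs => h' (hs Relation.ReflTransGen.refl)⟩
    (Set.toFinite _)

lemma appProd_le_of_below {r : Fin d → Fin d → Prop} {f : ℕ → Fin d → Fin d → EReal} {x : ℕ → ℝ}
    {v : Fin d → EReal} {V : ℝ} (hf : ∀ k i j, f k i j ≤ (x k : EReal))
    (hr : ∀ k i j, f k i j ≠ ⊥ → r i j) {n : ℕ} {i : Fin d}
    (hv : ∀ j, Relation.ReflTransGen r i j → v j ≤ (V : EReal)) :
    appProd n f v i ≤ ((∑ k ∈ Finset.range n, x k + V : ℝ) : EReal) := by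
  induction n generalizing f x i with
  | zero => simpa [appProd] using hv i .refl
  | succ n ih =>
    rw [appProd_succ, mpVec_le_iff]
    intro j
    by_cases hij : f 0 i j = ⊥
    · simp [hij]
    have h1 := ih (x := fun k => x (k + 1)) (f := shiftSeq 1 f) (fun k => hf (k + 1))
      (fun k => hr (k + 1)) (i := j) (fun l hl => hv l (.head (hr 0 i j hij) hl))
    refine (add_le_add (hf 0 i j) h1).trans ?_
    rw [← EReal.coe_add, EReal.coe_le_coe_iff, Finset.sum_range_succ']
    linarith

/-- A path starting in a component either stays in it, or leaves it for lower components. -/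
lemma appProd_le_max {r : Fin d → Fin d → Prop} {f : ℕ → Fin d → Fin d → EReal} {x : ℕ → ℝ}
    {v : Fin d → EReal} {V W : ℝ} (hf : ∀ k i j, f k i j ≤ (x k : EReal))
    (hr : ∀ k i j, f k i j ≠ ⊥ → r i j) {n : ℕ} {o i : Fin d} (hi : i ∈ sccOf r o)
    (hv : ∀ j ∈ sccOf r o, v j ≤ (V : EReal))
    (hw : ∀ j, Relation.ReflTransGen r o j → ¬ Relation.ReflTransGen r j o → v j ≤ (W : EReal)) :
    appProd n f v i ≤ max (lvec n (restrictSeq (sccOf r o) f) i + V)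
      ((∑ k ∈ Finset.range n, x k + W : ℝ) : EReal) := by
  induction n generalizing f x i with
  | zero =>
    refine le_max_of_le_left ?_
    simpa [appProd, lvec_zero] using hv i hi
  | succ n ih =>
    rw [appProd_succ, mpVec_le_iff]
    intro j
    by_cases hij : f 0 i j = ⊥
    · simp [hij]
    have hoj : Relation.ReflTransGen r o j := hi.1.tail (hr 0 i j hij)
    have hsum : ∑ k ∈ Finset.range (n + 1), x k = ∑ k ∈ Finset.range n, x (k + 1) + x 0 :=
      Finset.sum_range_succ' _ _
    by_cases hjo : Relation.ReflTransGen r j o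
    · have h1 := ih (x := fun k => x (k + 1)) (f := shiftSeq 1 f) (fun k => hf (k + 1))
        (fun k => hr (k + 1)) (i := j) ⟨hoj, hjo⟩
      refine (add_le_add_right h1 (f 0 i j)).trans ?_
      rcases le_total (lvec n (restrictSeq (sccOf r o) (shiftSeq 1 f)) j + (V : EReal))
        ((∑ k ∈ Finset.range n, x (k + 1) + W : ℝ) : EReal) with h | h
      · rw [max_eq_right h]
        refine le_max_of_le_right ((add_le_add_left (hf 0 i j) _).trans ?_)
        rw [← EReal.coe_add, EReal.coe_le_coe_iff, hsum]
        linarith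
      · rw [max_eq_left h, ← add_assoc]
        refine le_max_of_le_left (add_le_add_left ?_ _)
        have h2 : f 0 i j = restrictSeq (sccOf r o) f 0 i j := by
          have : i ∈ sccOf r o ∧ j ∈ sccOf r o := ⟨hi, hoj, hjo⟩
          simp [restrictSeq, mpRestrict, this]
        rw [h2, lvec_succ, shiftSeq_restrictSeq]
        exact le_mpVec _ _ i j
    · have h1 := appProd_le_of_below (n := n) (i := j) (V := W) (v := v)
        (x := fun k => x (k + 1)) (f := shiftSeq 1 f)
        (fun k => hf (k + 1)) (fun k => hr (k + 1))
        (fun l hl => hw l (hoj.trans hl) fun hlo => hjo (hl.trans hlo))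
      refine le_max_of_le_right ((add_le_add (hf 0 i j) h1).trans ?_)
      rw [← EReal.coe_add, EReal.coe_le_coe_iff, hsum]
      linarith

/-- Block decomposition of paths: `D k` bounds the weight of the `k`-th block of a path inside a
component, `Q` bounds the loss at a change of component. -/
lemma appProd_blocks_le {r : Fin d → Fin d → Prop} {f : ℕ → Fin d → Fin d → EReal} {x : ℕ → ℝ}
    {v : Fin d → EReal} {V Q : ℝ} {D : ℕ → ℝ} {N n : ℕ} {o : Fin d}
    (hf : ∀ k i j, f k i j ≤ (x k : EReal))
    (hr : ∀ k i j, f k i j ≠ ⊥ → r i j) (hv : ∀ j, v j ≤ (V : EReal)) (hQ : 0 ≤ Q)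
    (hD : ∀ k < n, ∀ i, Relation.ReflTransGen r o i →
      lvec N (restrictSeq (sccOf r i) (shiftSeq (k * N) f)) i ≤ (D k : EReal))
    (hXQ : ∀ k < n, ∑ l ∈ Finset.range N, x (l + k * N) ≤ D k + Q) :
    appProd (n * N) f v o ≤ ((∑ k ∈ Finset.range n, D k + d * Q + V : ℝ) : EReal) := by
  have key : ∀ s ≤ n, ∀ i, Relation.ReflTransGen r o i →
      appProd (s * N) (shiftSeq ((n - s) * N) f) v i ≤
        ((∑ k ∈ Finset.Ico (n - s) n, D k + reachCard r i * Q + V : ℝ) : EReal) := by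
    intro s
    induction s with
    | zero =>
      intro _ i _
      simp only [Nat.zero_mul, appProd, Nat.sub_zero, Finset.Ico_self, Finset.sum_empty]
      refine (hv i).trans (EReal.coe_le_coe_iff.2 ?_)
      have : 0 ≤ (reachCard r i : ℝ) * Q := mul_nonneg (Nat.cast_nonneg _) hQ
      linarith
    | succ s ih =>
      intro hs i hi
      have hk : n - (s + 1) < n := by omega
      have hidx : (n - (s + 1)) * N + N = (n - s) * N := by
        rw [show n - s = n - (s + 1) + 1 by omega]; ring
      rw [show (s + 1) * N = N + s * N by ring, appProd_add, shiftSeq_shiftSeq, hidx]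
      refine (appProd_le_max (r := r) (o := i) (x := fun l => x (l + (n - (s + 1)) * N))
        (V := ∑ k ∈ Finset.Ico (n - s) n, D k + reachCard r i * Q + V)
        (W := ∑ k ∈ Finset.Ico (n - s) n, D k + (reachCard r i - 1) * Q + V)
        (fun k => hf _) (fun k => hr _) (mem_sccOf_self r i) ?_ ?_).trans ?_
      · intro j hj
        refine (ih (by omega) j (hi.trans hj.1)).trans (EReal.coe_le_coe_iff.2 ?_)
        have : (reachCard r j : ℝ) ≤ reachCard r i := by
          exact_mod_cast reachCard_le_of_reach hj.1
        nlinarith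
      · intro j hij hji
        refine (ih (by omega) j (hi.trans hij)).trans (EReal.coe_le_coe_iff.2 ?_)
        have : (reachCard r j : ℝ) + 1 ≤ reachCard r i := by
          exact_mod_cast reachCard_lt hij hji
        nlinarith
      · rw [Finset.sum_eq_sum_Ico_succ_bot hk, show n - (s + 1) + 1 = n - s by omega]
        refine max_le ?_ ?_
        · refine (add_le_add_left (hD _ hk i hi) _).trans ?_
          rw [← EReal.coe_add, EReal.coe_le_coe_iff]
          linarith
        · rw [EReal.coe_le_coe_iff]
          have := hXQ _ hk
          linarith
  have h := key n le_rfl o .refl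
  simp only [Nat.sub_self, Nat.zero_mul, shiftSeq_zero] at h
  refine h.trans (EReal.coe_le_coe_iff.2 ?_)
  rw [Finset.range_eq_Ico]
  have : (reachCard r o : ℝ) ≤ d := by exact_mod_cast reachCard_le r o
  nlinarith

end Deterministic

section SequenceSpace

variable {E : Type*}

/-- A function on sequences depending only on the first `n` terms. -/
def DependsOnFirst {F : Type*} (n : ℕ) (Φ : (ℕ → E) → F) : Prop :=
  ∀ f g, (∀ k < n, f k = g k) → Φ f = Φ g

/-- Position after `n` steps of the walk started at `i` and driven by the sequence `f`. -/
def walk {ι : Type*} (step : E → ι → ι) : ℕ → (ℕ → E) → ι → ι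
  | 0, _, i => i
  | n + 1, f, i => walk step n (shiftSeq 1 f) (step (f 0) i)

lemma dependsOnFirst_walk {ι : Type*} (step : E → ι → ι) (n : ℕ) (i : ι) :
    DependsOnFirst n fun f => walk step n f i := by
  induction n generalizing i with
  | zero => exact fun _ _ _ => rfl
  | succ n ih =>
    intro f g h
    simp only [walk]
    rw [h 0 (by omega)]
    exact ih _ _ _ fun k hk => h (k + 1) (by omega)

variable [MeasurableSpace E]

/-- The law of an i.i.d. sequence with marginal law `ν`. -/
def seqLaw (ν : Measure E) : Measure (ℕ → E) := Measure.infinitePi fun _ => ν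

instance (ν : Measure E) [IsProbabilityMeasure ν] : IsProbabilityMeasure (seqLaw ν) := by
  unfold seqLaw
  infer_instance

lemma measurePreserving_seqLaw {Ω ι : Type*} [MeasurableSpace Ω] {μ : Measure Ω} {ν : Measure E}
    {X : ι → Ω → E} (hX : ∀ i, Measurable (X i))
    (hind : iIndepFun X μ) (hlaw : ∀ i, μ.map (X i) = ν) {e : ℕ → ι} (he : e.Injective) :
    MeasurePreserving (fun ω k => X (e k) ω) μ (seqLaw ν) := by
  refine ⟨measurable_pi_iff.2 fun k => hX (e k), ?_⟩
  have h := (hind.precomp he).map_fun_eq_infinitePi_map fun k => hX (e k)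
  rw [h, seqLaw]
  simp only [hlaw]

variable (ν : Measure E) [IsProbabilityMeasure ν]

lemma iIndepFun_eval_seqLaw : iIndepFun (fun (k : ℕ) (f : ℕ → E) => f k) (seqLaw ν) :=
  iIndepFun_infinitePi (X := fun _ M => M) fun _ => measurable_id

lemma seqLaw_map_eval (k : ℕ) : (seqLaw ν).map (fun f : ℕ → E => f k) = ν :=
  Measure.infinitePi_map_eval (fun _ : ℕ => ν) k

lemma measurePreserving_eval_seqLaw (k : ℕ) :
    MeasurePreserving (fun f : ℕ → E => f k) (seqLaw ν) ν :=
  ⟨measurable_pi_apply k, seqLaw_map_eval ν k⟩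

lemma measurePreserving_reindex {e : ℕ → ℕ} (he : e.Injective) :
    MeasurePreserving (fun (f : ℕ → E) k => f (e k)) (seqLaw ν) (seqLaw ν) :=
  measurePreserving_seqLaw (fun k => measurable_pi_apply k) (iIndepFun_eval_seqLaw ν)
    (seqLaw_map_eval ν) he

lemma measurePreserving_shiftSeq (n : ℕ) :
    MeasurePreserving (shiftSeq (E := E) n) (seqLaw ν) (seqLaw ν) :=
  measurePreserving_reindex ν (add_left_injective n)

lemma indepFun_reindex {e₁ e₂ : ℕ → ℕ} (h : ∀ a b, e₁ a ≠ e₂ b) :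
    IndepFun (fun (f : ℕ → E) a => f (e₁ a)) (fun f b => f (e₂ b)) (seqLaw ν) := by
  have hind : Indep (⨆ i ∈ Set.range e₁, MeasurableSpace.comap (fun f : ℕ → E => f i) inferInstance)
      (⨆ i ∈ Set.range e₂, MeasurableSpace.comap (fun f : ℕ → E => f i) inferInstance)
      (seqLaw ν) := by
    refine indep_iSup_of_disjoint (fun i => (measurable_pi_apply i).comap_le)
      (iIndepFun_eval_seqLaw ν).iIndep ?_
    rw [Set.disjoint_left]
    rintro _ ⟨a, rfl⟩ ⟨b, hb⟩
    exact h a b hb.symm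
  have hle : ∀ e : ℕ → ℕ,
      MeasurableSpace.comap (fun (f : ℕ → E) a => f (e a)) MeasurableSpace.pi ≤
      ⨆ i ∈ Set.range e, MeasurableSpace.comap (fun f : ℕ → E => f i) inferInstance := by
    intro e
    rw [MeasurableSpace.pi, MeasurableSpace.comap_iSup]
    refine iSup_le fun a => ?_
    rw [MeasurableSpace.comap_comp]
    exact le_iSup₂_of_le (e a) ⟨a, rfl⟩ le_rfl
  rw [IndepFun_iff_Indep]
  exact indep_of_indep_of_le_left (indep_of_indep_of_le_right hind (hle e₂)) (hle e₁)

variable {ν}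

lemma measure_inter_shiftSeq {n : ℕ} (hn : 0 < n) {S D : Set (ℕ → E)} (hS : MeasurableSet S)
    (hdep : DependsOnFirst n (· ∈ S)) (hD : MeasurableSet D) :
    seqLaw ν (S ∩ shiftSeq n ⁻¹' D) = seqLaw ν S * seqLaw ν D := by
  have hS' : (fun (f : ℕ → E) k => f (min k (n - 1))) ⁻¹' S = S := by
    ext f
    refine iff_of_eq (hdep (fun k => f (min k (n - 1))) f fun k hk => ?_)
    rw [min_eq_left (by omega)]
  have hind := indepFun_reindex ν (e₁ := fun k => min k (n - 1)) (e₂ := fun k => k + n)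
    (fun a b => by have := min_le_right a (n - 1); omega)
  have := hind.measure_inter_preimage_eq_mul S D hS hD
  rw [hS'] at this
  refine this.trans ?_
  rw [← (measurePreserving_shiftSeq ν n).measure_preimage hD.nullMeasurableSet]
  rfl

/-- Strong law of large numbers for a function of the successive blocks of length `N`. -/
lemma tendsto_blockAverage {N : ℕ} (hN : 0 < N) {Φ : (ℕ → E) → ℝ} (hΦ : Measurable Φ)
    (hint : Integrable Φ (seqLaw ν)) (hdep : DependsOnFirst N Φ) :
    ∀ᵐ f ∂(seqLaw ν), Tendsto
      (fun n : ℕ => (∑ k ∈ Finset.range n, Φ (shiftSeq (k * N) f)) / n)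
      atTop (𝓝 (∫ f, Φ f ∂(seqLaw ν))) := by
  have hblock : ∀ k (f : ℕ → E), Φ (shiftSeq (k * N) f) =
      Φ (fun l => f (min l (N - 1) + k * N)) := by
    intro k f
    refine hdep _ _ fun l hl => ?_
    rw [min_eq_left (by omega)]
    rfl
  have h := strong_law_ae_real (μ := seqLaw ν) (fun k f => Φ (shiftSeq (k * N) f))
    (by simpa [shiftSeq_zero] using hint) ?_ ?_
  · simpa [shiftSeq_zero] using h
  · intro a b hab
    have hind := indepFun_reindex ν (e₁ := fun l => min l (N - 1) + a * N)
      (e₂ := fun l => min l (N - 1) + b * N) (fun l m heq => hab ?_)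
    · simp only [Function.onFun, hblock]
      exact hind.comp hΦ hΦ
    · have h1 : min l (N - 1) < N := by omega
      have h2 : min m (N - 1) < N := by omega
      have h3 := congrArg (· / N) heq
      simpa [Nat.add_mul_div_right, hN, Nat.div_eq_of_lt h1, Nat.div_eq_of_lt h2] using h3
  · intro k
    have hk := measurePreserving_shiftSeq ν (k * N)
    refine ⟨(hΦ.comp hk.measurable).aemeasurable, by simpa [shiftSeq_zero] using hΦ.aemeasurable, ?_⟩
    simp only [Nat.zero_mul, shiftSeq_zero]
    rw [← hk.map_eq, Measure.map_map hΦ hk.measurable, hk.map_eq]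
    rfl

lemma measurableSet_walk_eq {ι : Type*} [Finite ι] {step : E → ι → ι}
    (hstep : ∀ i j, MeasurableSet {M | step M i = j}) (n : ℕ) (i j : ι) :
    MeasurableSet {f | walk step n f i = j} := by
  induction n generalizing i with
  | zero => exact MeasurableSet.const (i = j)
  | succ n ih =>
    have : {f | walk step (n + 1) f i = j} =
        ⋃ k, ({f | step (f 0) i = k} ∩ shiftSeq 1 ⁻¹' {f : ℕ → E | walk step n f k = j}) := by
      ext f
      simp [walk]
    rw [this]
    refine MeasurableSet.iUnion fun k => ?_
    exact (measurable_pi_apply (X := fun _ : ℕ => E) 0 (hstep i k)).inter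
      ((measurable_pi_iff.2 fun k => measurable_pi_apply (k + 1)) (ih k))

/-- A zero-one law: if the event `D i` forces the shifted event `D j` at the position `j` of a walk
driven by the sequence, and if no `D i` has full measure, then all of them are negligible. -/
lemma measure_eq_zero_of_walk {ι : Type*} [Finite ι] {step : E → ι → ι}
    (hstep : ∀ i j, MeasurableSet {M | step M i = j}) {K : Set ι}
    (hK : ∀ᵐ M ∂ν, ∀ i ∈ K, step M i ∈ K) {D : ι → Set (ℕ → E)}
    (hD : ∀ i, MeasurableSet (D i))
    (hDstep : ∀ᵐ f ∂(seqLaw ν), ∀ i ∈ K, f ∈ D i → shiftSeq 1 f ∈ D (step (f 0) i))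
    (hlt : ∀ i ∈ K, (seqLaw ν).real (D i) < 1) {i : ι} (hi : i ∈ K) : seqLaw ν (D i) = 0 := by
  classical
  have := Fintype.ofFinite ι
  obtain ⟨q, hq0, hq1, hq⟩ : ∃ q : ℝ, 0 ≤ q ∧ q < 1 ∧ ∀ j ∈ K, (seqLaw ν).real (D j) ≤ q := by
    obtain ⟨o, ho, hmax⟩ := (Set.toFinite K).exists_maximalFor (fun j => (seqLaw ν).real (D j)) K
      ⟨i, hi⟩
    refine ⟨_, measureReal_nonneg, hlt o ho, fun j hj => ?_⟩
    rcases le_total ((seqLaw ν).real (D o)) ((seqLaw ν).real (D j)) with h | h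
    · exact hmax hj h
    · exact h
  have hae : ∀ᵐ f ∂(seqLaw ν), ∀ n, ∀ j ∈ K, step (f n) j ∈ K ∧
      (shiftSeq n f ∈ D j → shiftSeq (n + 1) f ∈ D (step (f n) j)) := by
    rw [ae_all_iff]
    intro n
    filter_upwards [(measurePreserving_eval_seqLaw ν n).quasiMeasurePreserving.ae hK,
      (measurePreserving_shiftSeq ν n).quasiMeasurePreserving.ae hDstep] with f h1 h2 j hj
    refine ⟨h1 j hj, fun hf => ?_⟩
    have := h2 j hj hf
    rw [shiftSeq_shiftSeq] at this
    simpa [shiftSeq] using this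
  have hwalk : ∀ᵐ f ∂(seqLaw ν), ∀ n, f ∈ D i →
      walk step n f i ∈ K ∧ shiftSeq n f ∈ D (walk step n f i) := by
    filter_upwards [hae] with f hf n hfD
    have key : ∀ n m, ∀ j ∈ K, shiftSeq m f ∈ D j → walk step n (shiftSeq m f) j ∈ K ∧
        shiftSeq (m + n) f ∈ D (walk step n (shiftSeq m f) j) := by
      intro n
      induction n with
      | zero => exact fun m j hj h => ⟨hj, h⟩
      | succ n ih =>
        intro m j hj h
        have h0 : shiftSeq m f 0 = f m := by simp [shiftSeq]
        simp only [walk, shiftSeq_shiftSeq, h0]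
        have := ih (m + 1) _ (hf m j hj).1 ((hf m j hj).2 h)
        rwa [show m + 1 + n = m + (n + 1) by omega] at this
    have := key n 0 i hi hfD
    rwa [shiftSeq_zero, Nat.zero_add] at this
  have hbound : ∀ n, 0 < n → ∀ G : Set (ℕ → E), MeasurableSet G → DependsOnFirst n (· ∈ G) →
      (seqLaw ν).real (D i ∩ G) ≤ q * (seqLaw ν).real G := by
    intro n hn G hG hdep
    let S : ι → Set (ℕ → E) := fun j => G ∩ {f | walk step n f i = j}
    have hSm : ∀ j, MeasurableSet (S j) := fun j => hG.inter (measurableSet_walk_eq hstep n i j)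
    have hSd : ∀ j, DependsOnFirst n (· ∈ S j) := by
      intro j f g hfg
      have h1 := hdep f g hfg
      have h2 := dependsOnFirst_walk step n i f g hfg
      simp only [S, Set.mem_inter_iff, Set.mem_ofPred_eq] at h1 h2 ⊢
      rw [h1, h2]
    have hprod : ∀ j, (seqLaw ν).real (S j ∩ shiftSeq n ⁻¹' D j) =
        (seqLaw ν).real (S j) * (seqLaw ν).real (D j) := by
      intro j
      simp only [measureReal_def]
      rw [measure_inter_shiftSeq hn (hSm j) (hSd j) (hD j), ENNReal.toReal_mul]
    have hGsum : (seqLaw ν).real G = ∑ j, (seqLaw ν).real (S j) := by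
      rw [← measureReal_iUnion_fintype _ hSm]
      · congr 1
        ext f
        simp [S]
      · intro j k hjk
        refine Set.disjoint_left.2 fun f hf hf' => hjk ?_
        exact hf.2.symm.trans hf'.2
    calc (seqLaw ν).real (D i ∩ G)
        ≤ (seqLaw ν).real (⋃ j ∈ (Finset.univ.filter (· ∈ K)), (S j ∩ shiftSeq n ⁻¹' D j)) := by
          refine ENNReal.toReal_mono (measure_ne_top _ _) (measure_mono_ae ?_)
          filter_upwards [hwalk] with f hf hfG
          obtain ⟨h1, h2⟩ := hf n hfG.1
          exact Set.mem_biUnion (x := walk step n f i) (by simpa using h1) ⟨⟨hfG.2, rfl⟩, h2⟩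
      _ ≤ ∑ j ∈ Finset.univ.filter (· ∈ K), (seqLaw ν).real (S j ∩ shiftSeq n ⁻¹' D j) :=
          measureReal_biUnion_finset_le _ _
      _ ≤ ∑ j ∈ Finset.univ.filter (· ∈ K), q * (seqLaw ν).real (S j) := by
          refine Finset.sum_le_sum fun j hj => ?_
          rw [hprod, mul_comm]
          exact mul_le_mul_of_nonneg_right (hq j (by simpa using hj)) measureReal_nonneg
      _ ≤ ∑ j, q * (seqLaw ν).real (S j) :=
          Finset.sum_le_sum_of_subset_of_nonneg (Finset.filter_subset _ _)
            fun j _ _ => mul_nonneg hq0 measureReal_nonneg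
      _ = q * (seqLaw ν).real G := by rw [hGsum, Finset.mul_sum]
  have hdense : (seqLaw ν).MeasureDense (measurableCylinders fun _ : ℕ => E) :=
    Measure.MeasureDense.of_generateFrom_isSetAlgebra_finite _
      isSetAlgebra_measurableCylinders generateFrom_measurableCylinders.symm
  have happrox : ∀ ε : ℝ, 0 < ε → (1 - q) * (seqLaw ν).real (D i) ≤ 2 * ε := by
    intro ε hε
    obtain ⟨G, hG, hGε⟩ := hdense.approx (D i) (hD i) (measure_ne_top _ _) ε hε
    have hGm := hdense.measurable G hG
    obtain ⟨s, S, -, rfl⟩ := (mem_measurableCylinders G).1 hG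
    have hdep : DependsOnFirst (s.sup id + 1) (· ∈ cylinder (α := fun _ : ℕ => E) s S) := by
      intro f g hfg
      have : s.restrict f = s.restrict g := by
        funext k
        exact hfg k (Nat.lt_succ_of_le (Finset.le_sup (f := id) k.2))
      simp only [mem_cylinder, this]
    have hb := hbound _ (Nat.succ_pos _) _ hGm hdep
    set G := cylinder (α := fun _ : ℕ => E) s S
    have hsymm : (seqLaw ν).real (symmDiff (D i) G) ≤ ε :=
      ENNReal.toReal_le_of_le_ofReal hε.le hGε.le
    have h1 : (seqLaw ν).real (D i) ≤
        (seqLaw ν).real (D i ∩ G) + (seqLaw ν).real (symmDiff (D i) G) := by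
      refine (measureReal_mono ?_).trans (measureReal_union_le _ _)
      intro f hf
      by_cases hfG : f ∈ G
      · exact Or.inl ⟨hf, hfG⟩
      · exact Or.inr (Or.inl ⟨hf, hfG⟩)
    have h2 : (seqLaw ν).real G ≤
        (seqLaw ν).real (D i) + (seqLaw ν).real (symmDiff (D i) G) := by
      refine (measureReal_mono ?_).trans (measureReal_union_le _ _)
      intro f hf
      by_cases hfD : f ∈ D i
      · exact Or.inl hfD
      · exact Or.inr (Or.inr ⟨hf, hfD⟩)
    nlinarith
  have hle : (1 - q) * (seqLaw ν).real (D i) ≤ 0 :=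
    le_of_forall_pos_le_add fun ε hε => by
      have := happrox (ε / 2) (by linarith)
      linarith
  have h0 : (seqLaw ν).real (D i) = 0 :=
    le_antisymm (by nlinarith) measureReal_nonneg
  exact (measureReal_eq_zero_iff (measure_ne_top _ _)).1 h0

end SequenceSpace

section MaxPlusMeasurability

variable {d : ℕ}

lemma dependsOnFirst_appProd (n : ℕ) (v : Fin d → EReal) :
    DependsOnFirst n fun f => appProd n f v := by
  induction n with
  | zero => exact fun _ _ _ => rfl
  | succ n ih =>
    intro f g h
    simp only [appProd_succ]
    rw [h 0 (by omega)]
    exact congrArg _ (ih _ _ fun k hk => h (k + 1) (by omega))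

lemma dependsOnFirst_lvec_restrictSeq (c : Set (Fin d)) (n : ℕ) :
    DependsOnFirst n fun f => lvec n (restrictSeq c f) := fun _ _ h =>
  dependsOnFirst_appProd n _ _ _ fun k hk => congrArg (mpRestrict c) (h k hk)

lemma measurable_shiftSeq {E : Type*} [MeasurableSpace E] (n : ℕ) :
    Measurable (shiftSeq (E := E) n) :=
  measurable_pi_iff.2 fun k => measurable_pi_apply (k + n)

lemma measurable_entry (k : ℕ) (i j : Fin d) :
    Measurable fun f : ℕ → Fin d → Fin d → EReal => f k i j :=
  (measurable_pi_apply j).comp ((measurable_pi_apply i).comp (measurable_pi_apply k))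

lemma measurable_lvec (n : ℕ) (i : Fin d) :
    Measurable fun f : ℕ → Fin d → Fin d → EReal => lvec n f i := by
  induction n generalizing i with
  | zero => exact measurable_const
  | succ n ih =>
    simp only [lvec_succ, mpVec]
    exact Measurable.iSup fun j =>
      (measurable_entry 0 i j).add ((ih j).comp (measurable_shiftSeq 1))

lemma measurable_restrictSeq (c : Set (Fin d)) : Measurable (restrictSeq c) := by
  classical
  refine measurable_pi_iff.2 fun k => measurable_pi_iff.2 fun i => measurable_pi_iff.2 fun j => ?_
  by_cases h : i ∈ c ∧ j ∈ c
  · simpa only [restrictSeq, mpRestrict, if_pos h] using measurable_entry k i j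
  · simpa only [restrictSeq, mpRestrict, if_neg h] using measurable_const

lemma measurable_lvec_restrictSeq (c : Set (Fin d)) (n : ℕ) (i : Fin d) :
    Measurable fun f : ℕ → Fin d → Fin d → EReal => lvec n (restrictSeq c f) i :=
  (measurable_lvec n i).comp (measurable_restrictSeq c)

lemma measurable_entryBound : Measurable (entryBound (d := d)) := by
  refine Finset.measurable_sum _ fun i _ => ?_
  have h : Measurable fun M : Fin d → Fin d → EReal => ⨆ j, M i j :=
    Measurable.iSup fun j => (measurable_pi_apply j).comp (measurable_pi_apply i)
  exact (measurable_ereal_toReal.comp h).abs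

end MaxPlusMeasurability

section Scale

lemma lt_mpScale_iff {n : ℕ} (hn : 0 < n) {y : EReal} {m : ℝ} :
    (m : EReal) < mpScale n y ↔ ((m * n : ℝ) : EReal) < y := by
  have hn' : (0 : ℝ) < n := by exact_mod_cast hn
  have hinv : (0 : ℝ) < (n : ℝ)⁻¹ := inv_pos.2 hn'
  unfold mpScale
  induction y with
  | bot => simp [EReal.coe_mul_bot_of_pos hinv]
  | top => simp only [EReal.coe_mul_top_of_pos hinv, EReal.coe_lt_top]
  | coe y =>
    rw [← EReal.coe_mul, EReal.coe_lt_coe_iff, EReal.coe_lt_coe_iff, inv_mul_eq_div, lt_div_iff₀ hn']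

end Scale

section GrowthSets

variable {d : ℕ}

/-- The sequences along which `lvec` grows at node `i` at speed at least `a`. -/
def growthSet (i : Fin d) (a : ℝ) : Set (ℕ → Fin d → Fin d → EReal) :=
  {f | ∃ C : ℕ, ∀ n : ℕ, ((a * n - C : ℝ) : EReal) ≤ lvec n f i}

lemma measurableSet_growthSet (i : Fin d) (a : ℝ) : MeasurableSet (growthSet i a) := by
  have : growthSet i a = ⋃ C : ℕ, ⋂ n : ℕ, {f | ((a * n - C : ℝ) : EReal) ≤ lvec n f i} := by
    ext f
    simp [growthSet]
  rw [this]
  exact MeasurableSet.iUnion fun C => MeasurableSet.iInter fun n =>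
    measurableSet_le measurable_const (measurable_lvec n i)

lemma mem_growthSet_of_shiftSeq {i j : Fin d} {a : ℝ} {f : ℕ → Fin d → Fin d → EReal}
    (hij : f 0 i j ≠ ⊥) (hf : shiftSeq 1 f ∈ growthSet j a) : f ∈ growthSet i a := by
  obtain ⟨C, hC⟩ := hf
  obtain ⟨w, hw⟩ : ∃ w : ℝ, (w : EReal) ≤ f 0 i j := by
    obtain ⟨w, -, hw⟩ := EReal.lt_iff_exists_real_btwn.1 (bot_lt_iff_ne_bot.2 hij)
    exact ⟨w, hw.le⟩
  obtain ⟨C', hC'⟩ := exists_nat_ge (C + |a| + |w|)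
  refine ⟨C', fun n => ?_⟩
  have ha := le_abs_self a
  have hw' := neg_abs_le w
  have h1 := abs_nonneg a
  have h2 := abs_nonneg w
  have h3 : (0 : ℝ) ≤ C := C.cast_nonneg
  cases n with
  | zero =>
    rw [lvec_zero]
    refine EReal.coe_le_coe_iff.2 ?_
    push_cast
    linarith
  | succ n =>
    rw [lvec_succ]
    refine le_trans ?_ ((add_le_add hw (hC n)).trans (le_mpVec _ _ i j))
    rw [← EReal.coe_add, EReal.coe_le_coe_iff]
    push_cast
    linarith

lemma eventually_lt_mpScale_of_mem_growthSet {i : Fin d} {a b : ℝ}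
    {f : ℕ → Fin d → Fin d → EReal} (hf : f ∈ growthSet i a) (hb : b < a) :
    ∀ᶠ n in atTop, (b : EReal) < mpScale n (lvec n f i) := by
  obtain ⟨C, hC⟩ := hf
  obtain ⟨n₀, hn₀⟩ := exists_nat_gt (C / (a - b))
  filter_upwards [eventually_ge_atTop (n₀ + 1)] with n hn
  refine (lt_mpScale_iff (by omega)).2 (lt_of_lt_of_le ?_ (hC n))
  rw [EReal.coe_lt_coe_iff]
  have h1 : (n₀ : ℝ) ≤ n := by exact_mod_cast (by omega : n₀ ≤ n)
  have h2 := (div_lt_iff₀ (by linarith)).1 (hn₀.trans_le h1)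
  nlinarith

lemma le_of_tendsto_of_mem_growthSet {i : Fin d} {a : ℝ} {f : ℕ → Fin d → Fin d → EReal}
    {L : EReal} (hf : f ∈ growthSet i a)
    (hL : Tendsto (fun n => mpScale n (lvec n f i)) atTop (𝓝 L)) : (a : EReal) ≤ L := by
  by_contra! hlt
  obtain ⟨b, hLb, hba⟩ := EReal.lt_iff_exists_real_btwn.1 hlt
  exact hLb.not_ge (ge_of_tendsto hL ((eventually_lt_mpScale_of_mem_growthSet hf
    (EReal.coe_lt_coe_iff.1 hba)).mono fun _ h => h.le))

lemma measurableSet_entry_ne_bot (i j : Fin d) :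
    MeasurableSet {M : Fin d → Fin d → EReal | M i j ≠ ⊥} :=
  ((measurable_pi_apply j).comp (measurable_pi_apply i)) (measurableSet_singleton ⊥).compl

lemma measurableSet_of_support (Q : (Fin d → Fin d → Prop) → Prop) :
    MeasurableSet {M : Fin d → Fin d → EReal | Q fun i j => M i j ≠ ⊥} := by
  have hsupp : Measurable fun (M : Fin d → Fin d → EReal) (i j : Fin d) => M i j ≠ ⊥ :=
    measurable_pi_iff.2 fun i => measurable_pi_iff.2 fun j =>
      measurableSet_setOfPred.1 (measurableSet_entry_ne_bot i j)
  exact hsupp (Set.toFinite {p | Q p}).measurableSet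

variable {ν : Measure (Fin d → Fin d → EReal)} [IsProbabilityMeasure ν]

lemma measure_growthSet_ne_zero_of_arc {i j : Fin d} {a : ℝ} (hij : ν {M | M i j ≠ ⊥} ≠ 0)
    (hj : seqLaw ν (growthSet j a) ≠ 0) : seqLaw ν (growthSet i a) ≠ 0 := by
  have hS := measurableSet_entry_ne_bot i j
  have h := measure_inter_shiftSeq (ν := ν) one_pos
    (S := (fun f : ℕ → Fin d → Fin d → EReal => f 0) ⁻¹' {M | M i j ≠ ⊥})
    ((measurable_pi_apply 0) hS)
    (fun f g hfg => by simp [hfg 0 one_pos]) (measurableSet_growthSet j a)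
  rw [(measurePreserving_eval_seqLaw ν 0).measure_preimage hS.nullMeasurableSet] at h
  have hne : ν {M | M i j ≠ ⊥} * seqLaw ν (growthSet j a) ≠ 0 := mul_ne_zero hij hj
  rw [← h] at hne
  exact fun h0 => hne (measure_mono_null
    (fun f hf => mem_growthSet_of_shiftSeq (i := i) (j := j) hf.1 hf.2) h0)

lemma measure_growthSet_ne_zero_of_reach {r : Fin d → Fin d → Prop}
    (hr : ∀ i j, r i j → ν {M | M i j ≠ ⊥} ≠ 0) {i j : Fin d} {a : ℝ}
    (hij : Relation.ReflTransGen r i j) (hj : seqLaw ν (growthSet j a) ≠ 0) :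
    seqLaw ν (growthSet i a) ≠ 0 := by
  induction hij using Relation.ReflTransGen.head_induction_on with
  | refl => exact hj
  | head h _ ih => exact measure_growthSet_ne_zero_of_arc (hr _ _ h) ih

lemma ae_mem_growthSet {K : Set (Fin d)} {a : ℝ}
    (hK : ∀ᵐ M ∂ν, ∀ i ∈ K, ∃ j ∈ K, M i j ≠ ⊥)
    (hpos : ∀ j ∈ K, seqLaw ν (growthSet j a) ≠ 0) {i : Fin d} (hi : i ∈ K) :
    ∀ᵐ f ∂(seqLaw ν), f ∈ growthSet i a := by
  classical
  let pick : (Fin d → Prop) → Fin d → Fin d := fun p i => if h : ∃ j ∈ K, p j then h.choose else i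
  let step : (Fin d → Fin d → EReal) → Fin d → Fin d := fun M i => pick (fun j => M i j ≠ ⊥) i
  have hstep : ∀ M i, (∃ j ∈ K, M i j ≠ ⊥) → step M i ∈ K ∧ M i (step M i) ≠ ⊥ := by
    intro M i h
    simp only [step, pick, dif_pos h]
    exact h.choose_spec
  have hmeas : ∀ i j, MeasurableSet {M : Fin d → Fin d → EReal | step M i = j} := fun i j =>
    measurableSet_of_support fun p => pick (p i) i = j
  have h0 := measure_eq_zero_of_walk (ν := ν) (K := K) hmeas
    (D := fun i => (growthSet i a)ᶜ) (by filter_upwards [hK] with M hM i hi using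
      (hstep M i (hM i hi)).1)
    (fun i => (measurableSet_growthSet i a).compl) ?_ ?_ hi
  · exact h0
  · filter_upwards [(measurePreserving_eval_seqLaw ν 0).quasiMeasurePreserving.ae hK]
      with f hf i hi hfi hs
    exact hfi (mem_growthSet_of_shiftSeq (hstep _ i (hf i hi)).2 hs)
  · intro j hj
    rw [probReal_compl_eq_one_sub (measurableSet_growthSet j a)]
    have : (seqLaw ν).real (growthSet j a) ≠ 0 := by
      simpa [measureReal_eq_zero_iff] using hpos j hj
    have := measureReal_nonneg.lt_of_ne this.symm
    linarith

end GrowthSets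

section Reversal

variable {d : ℕ}

lemma xvec_eq_lvec {n : ℕ} {f g : ℕ → Fin d → Fin d → EReal}
    (h : ∀ k < n, g k = f (n - 1 - k)) : xvec f n = lvec n g := by
  induction n generalizing g with
  | zero => rfl
  | succ n ih =>
    rw [lvec_succ, xvec, h 0 (by omega)]
    congr 1
    refine ih fun k hk => ?_
    rw [shiftSeq, h (k + 1) (by omega)]
    congr 1
    omega

/-- The involution of `ℕ` reversing `{0, …, n - 1}`. -/
def reverseFirst (n k : ℕ) : ℕ := if k < n then n - 1 - k else k

lemma reverseFirst_injective (n : ℕ) : (reverseFirst n).Injective := by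
  intro k l h
  unfold reverseFirst at h
  split_ifs at h <;> omega

/-- The sequences whose product of length `n` exceeds `b * n` inside `c`. -/
def exceedSet (c : Set (Fin d)) (b : ℝ) (n : ℕ) : Set (ℕ → Fin d → Fin d → EReal) :=
  {f | ∃ i ∈ c, ((b * n : ℝ) : EReal) < lvec n (restrictSeq c f) i}

lemma measurableSet_exceedSet (c : Set (Fin d)) (b : ℝ) (n : ℕ) :
    MeasurableSet (exceedSet c b n) := by
  have : exceedSet c b n =
      ⋃ i, ⋃ (_ : i ∈ c), {f | ((b * n : ℝ) : EReal) < lvec n (restrictSeq c f) i} := by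
    ext f
    simp [exceedSet]
  rw [this]
  exact MeasurableSet.iUnion fun i => MeasurableSet.iUnion fun _ =>
    measurableSet_lt measurable_const (measurable_lvec_restrictSeq c n i)

variable {Ω : Type*} [MeasurableSpace Ω] {μ : Measure Ω}
  {A : ℤ → Ω → Fin d → Fin d → EReal} {ν : Measure (Fin d → Fin d → EReal)}
  {c : Set (Fin d)} {g : EReal}

lemma exists_measurePreserving_exceedSet (hmeas : ∀ n, Measurable (A n)) (hindep : iIndepFun A μ)
    (hlaw : ∀ n, μ.map (A n) = ν) (n : ℕ) :
    ∃ Ψ : Ω → ℕ → Fin d → Fin d → EReal, MeasurePreserving Ψ μ (seqLaw ν) ∧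
      ∀ (b : ℝ) ω, 0 < n → (Ψ ω ∈ exceedSet c b n ↔ (b : EReal) < mpScale n
        (⨆ i, ⨆ (_ : i ∈ c), xvec (fun m => mpRestrict c (A (m : ℤ) ω)) n i)) := by
  refine ⟨_, measurePreserving_seqLaw hmeas hindep hlaw
    (e := fun k => ((reverseFirst n k : ℕ) : ℤ))
    (Nat.cast_injective.comp (reverseFirst_injective n)), fun b ω hn => ?_⟩
  rw [lt_mpScale_iff hn, xvec_eq_lvec (g := restrictSeq c fun k => A (reverseFirst n k : ℕ) ω)]
  · simp [exceedSet, lt_iSup_iff]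
  · intro k hk
    simp [restrictSeq, reverseFirst, hk]

variable [IsProbabilityMeasure μ]

lemma tendsto_measure_exceedSet (hmeas : ∀ n, Measurable (A n)) (hindep : iIndepFun A μ)
    (hlaw : ∀ n, μ.map (A n) = ν)
    (hg : ∀ᵐ ω ∂μ, Tendsto (fun n => mpScale n
      (⨆ i, ⨆ (_ : i ∈ c), xvec (fun m => mpRestrict c (A (m : ℤ) ω)) n i)) atTop (𝓝 g))
    {b : ℝ} (hb : g < b) :
    Tendsto (fun n => seqLaw ν (exceedSet c b n)) atTop (𝓝 0) := by
  choose Ψ hΨ hiff using fun n =>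
    exists_measurePreserving_exceedSet (c := c) hmeas hindep hlaw n
  have h := tendsto_measure_of_ae_tendsto_indicator_of_isFiniteMeasure (μ := μ) atTop
    (A := ∅) (As := fun n => Ψ n ⁻¹' exceedSet c b n) MeasurableSet.empty
    (fun n => (hΨ n).measurable (measurableSet_exceedSet c b n)) (by
      filter_upwards [hg] with ω hω
      filter_upwards [eventually_gt_atTop 0, hω.eventually_lt_const hb] with n hn hlt
      simpa [hiff n b ω hn] using hlt.le)
  simpa [(hΨ _).measure_preimage (measurableSet_exceedSet c b _).nullMeasurableSet] using h

lemma tendsto_measure_compl_exceedSet (hmeas : ∀ n, Measurable (A n)) (hindep : iIndepFun A μ)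
    (hlaw : ∀ n, μ.map (A n) = ν)
    (hg : ∀ᵐ ω ∂μ, Tendsto (fun n => mpScale n
      (⨆ i, ⨆ (_ : i ∈ c), xvec (fun m => mpRestrict c (A (m : ℤ) ω)) n i)) atTop (𝓝 g))
    {b : ℝ} (hb : (b : EReal) < g) :
    Tendsto (fun n => seqLaw ν (exceedSet c b n)ᶜ) atTop (𝓝 0) := by
  choose Ψ hΨ hiff using fun n =>
    exists_measurePreserving_exceedSet (c := c) hmeas hindep hlaw n
  have h := tendsto_measure_of_ae_tendsto_indicator_of_isFiniteMeasure (μ := μ) atTop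
    (A := ∅) (As := fun n => Ψ n ⁻¹' (exceedSet c b n)ᶜ) MeasurableSet.empty
    (fun n => (hΨ n).measurable (measurableSet_exceedSet c b n).compl) (by
      filter_upwards [hg] with ω hω
      filter_upwards [eventually_gt_atTop 0, hω.eventually_const_lt hb] with n hn hlt
      simpa [hiff n b ω hn] using hlt)
  have h' : ∀ n, μ (Ψ n ⁻¹' (exceedSet c b n)ᶜ) = seqLaw ν (exceedSet c b n)ᶜ := fun n =>
    (hΨ n).measure_preimage (measurableSet_exceedSet c b n).compl.nullMeasurableSet
  simpa only [h', measure_empty] using h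

end Reversal

section LowerBound

variable {d : ℕ}

/-- The sequences admitting, inside `c` and from every node, a product of length at most `N` and
slope at most `a`. -/
def cutSet (c : Set (Fin d)) (a : ℝ) (N : ℕ) : Set (ℕ → Fin d → Fin d → EReal) :=
  {f | ∀ i, ∃ l, 1 ≤ l ∧ l ≤ N ∧ lvec l (restrictSeq c f) i ≤ ((a * l : ℝ) : EReal)}

lemma measurableSet_cutSet (c : Set (Fin d)) (a : ℝ) (N : ℕ) : MeasurableSet (cutSet c a N) := by
  have : cutSet c a N = ⋂ i, ⋃ l, ⋃ (_ : 1 ≤ l ∧ l ≤ N),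
      {f | lvec l (restrictSeq c f) i ≤ ((a * l : ℝ) : EReal)} := by
    ext f
    simp [cutSet, and_assoc]
  rw [this]
  exact MeasurableSet.iInter fun i => MeasurableSet.iUnion fun l => MeasurableSet.iUnion fun _ =>
    measurableSet_le (measurable_lvec_restrictSeq c l i) measurable_const

/-- Outside the sets of linear growth, cuts of some bounded length exist. -/
lemma eventually_mem_cutSet {c : Set (Fin d)} {a : ℝ} {f : ℕ → Fin d → Fin d → EReal}
    (hf : ∀ i ∈ c, f ∉ growthSet i a) : ∀ᶠ N in atTop, f ∈ cutSet c a N := by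
  have hex : ∀ i, ∃ l : ℕ, 1 ≤ l ∧ lvec l (restrictSeq c f) i ≤ ((a * l : ℝ) : EReal) := by
    intro i
    by_cases hi : i ∈ c
    · have h := hf i hi
      simp only [growthSet, Set.mem_ofPred_eq, not_exists, not_forall, not_le] at h
      obtain ⟨n, hn⟩ := h 0
      refine ⟨n, Nat.one_le_iff_ne_zero.2 ?_, (lvec_restrictSeq_le c n f i).trans ?_⟩
      · rintro rfl
        simp [lvec_zero] at hn
      · simpa using hn.le
    · exact ⟨1, le_rfl, by rw [lvec_restrictSeq_eq_bot one_ne_zero f hi]; exact bot_le⟩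
  choose l hl1 hl2 using hex
  filter_upwards [eventually_ge_atTop (∑ i, l i)] with N hN i
  exact ⟨l i, hl1 i,
    (Finset.single_le_sum (f := l) (fun _ _ => Nat.zero_le _) (Finset.mem_univ i)).trans hN, hl2 i⟩

variable {ν : Measure (Fin d → Fin d → EReal)} [IsProbabilityMeasure ν]

lemma ae_forall_le_entryBound (htop : ∀ᵐ M ∂ν, ∀ i j, M i j ≠ ⊤) :
    ∀ᵐ f ∂(seqLaw ν), ∀ k i j, f k i j ≤ (entryBound (f k) : EReal) := by
  rw [ae_all_iff]
  intro k
  filter_upwards [(measurePreserving_eval_seqLaw ν k).quasiMeasurePreserving.ae htop] with f hf i j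
  exact le_entryBound hf i j

lemma integrable_entryBound_eval (hX : Integrable entryBound ν) (k : ℕ) :
    Integrable (fun f : ℕ → Fin d → Fin d → EReal => entryBound (f k)) (seqLaw ν) :=
  (measurePreserving_eval_seqLaw ν k).integrable_comp_of_integrable hX

lemma integral_entryBound_eval (k : ℕ) :
    ∫ f, entryBound (f k) ∂(seqLaw ν) = ∫ M : Fin d → Fin d → EReal, entryBound M ∂ν := by
  rw [← (measurePreserving_eval_seqLaw ν k).map_eq, integral_map (measurable_pi_apply k).aemeasurable
    measurable_entryBound.aestronglyMeasurable, (measurePreserving_eval_seqLaw ν k).map_eq]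

/-- The cost of the absence of a short cut at the beginning of a sequence. -/
def cutCost (c : Set (Fin d)) (a : ℝ) (N : ℕ) : (ℕ → Fin d → Fin d → EReal) → ℝ :=
  (cutSet c a N)ᶜ.indicator fun f => entryBound (f 0) + |a|

lemma measurable_cutCost (c : Set (Fin d)) (a : ℝ) (N : ℕ) : Measurable (cutCost c a N) :=
  Measurable.indicator ((measurable_entryBound.comp (measurable_pi_apply 0)).add_const _)
    (measurableSet_cutSet c a N).compl

lemma cutCost_nonneg (c : Set (Fin d)) (a : ℝ) (N : ℕ) (f : ℕ → Fin d → Fin d → EReal) :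
    0 ≤ cutCost c a N f :=
  Set.indicator_nonneg (fun f _ => add_nonneg (entryBound_nonneg (f 0)) (abs_nonneg a)) f

lemma cutCost_le (c : Set (Fin d)) (a : ℝ) (N : ℕ) (f : ℕ → Fin d → Fin d → EReal) :
    cutCost c a N f ≤ entryBound (f 0) + |a| :=
  Set.indicator_le_self' (fun f _ => add_nonneg (entryBound_nonneg (f 0)) (abs_nonneg a)) f

lemma integrable_cutCost (hX : Integrable entryBound ν) (c : Set (Fin d)) (a : ℝ) (N : ℕ) :
    Integrable (cutCost c a N) (seqLaw ν) :=
  ((integrable_entryBound_eval hX 0).add (integrable_const _)).indicator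
    (measurableSet_cutSet c a N).compl

lemma tendsto_integral_cutCost (hX : Integrable entryBound ν) {c : Set (Fin d)} {a : ℝ}
    (h0 : ∀ i ∈ c, seqLaw ν (growthSet i a) = 0) :
    Tendsto (fun N => ∫ f, cutCost c a N f ∂(seqLaw ν)) atTop (𝓝 0) := by
  have hae : ∀ᵐ f ∂(seqLaw ν), ∀ i ∈ c, f ∉ growthSet i a := by
    rw [ae_all_iff]
    intro i
    by_cases hi : i ∈ c
    · filter_upwards [measure_eq_zero_iff_ae_notMem.1 (h0 i hi)] with f hf _ using hf
    · exact Eventually.of_forall fun f h => absurd h hi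
  have h := tendsto_integral_of_dominated_convergence (μ := seqLaw ν)
    (F := fun N f => cutCost c a N f) (f := fun _ => 0)
    (fun f => entryBound (f 0) + |a|)
    (fun N => (measurable_cutCost c a N).aestronglyMeasurable)
    ((integrable_entryBound_eval hX 0).add (integrable_const _))
    (fun N => Eventually.of_forall fun f => by
      rw [Real.norm_of_nonneg (cutCost_nonneg c a N f)]
      exact cutCost_le c a N f)
    (by
      filter_upwards [hae] with f hf
      refine tendsto_const_nhds.congr' ?_
      filter_upwards [eventually_mem_cutSet hf] with N hN
      exact (Set.indicator_of_notMem (Set.notMem_compl_iff.2 hN) _).symm)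
  simpa using h

/-- The error term of the greedy decomposition with cuts of length at most `N`. -/
def cutError (c : Set (Fin d)) (a : ℝ) (N n : ℕ) (f : ℕ → Fin d → Fin d → EReal) : ℝ :=
  ∑ k ∈ Finset.range n, (cutCost c a N (shiftSeq k f) +
    if n ≤ k + N then entryBound (f k) + |a| else 0)

lemma cutError_nonneg (c : Set (Fin d)) (a : ℝ) (N n : ℕ) (f : ℕ → Fin d → Fin d → EReal) :
    0 ≤ cutError c a N n f := by
  refine Finset.sum_nonneg fun k _ => add_nonneg (cutCost_nonneg _ _ _ _) ?_
  split_ifs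
  · exact add_nonneg (entryBound_nonneg _) (abs_nonneg _)
  · exact le_rfl

lemma lvec_restrictSeq_le_cutError {c : Set (Fin d)} {a : ℝ} {N n : ℕ}
    {f : ℕ → Fin d → Fin d → EReal} (hf : ∀ k i j, f k i j ≤ (entryBound (f k) : EReal))
    (i : Fin d) :
    lvec n (restrictSeq c f) i ≤ ((a * n + cutError c a N n f : ℝ) : EReal) := by
  refine (lvec_le_of_cuts (x := fun k => entryBound (f k)) (a := a) (N := N)
    (fun k => entryBound_nonneg _) (fun k i j => (mpRestrict_le c (f k) i j).trans (hf k i j))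
    {k | shiftSeq k f ∉ cutSet c a N} (fun k hk i => ?_) n i).trans ?_
  · have hk' : shiftSeq k f ∈ cutSet c a N := not_not.1 hk
    exact hk' i
  · refine EReal.coe_le_coe_iff.2 (by
      refine add_le_add_right (Finset.sum_le_sum fun k _ => ?_) _
      have h0 : 0 ≤ entryBound (f k) + |a| := add_nonneg (entryBound_nonneg _) (abs_nonneg _)
      by_cases h1 : shiftSeq k f ∈ cutSet c a N
      · by_cases h2 : n ≤ k + N
        · simp [cutCost, h1, h2]
        · simp [cutCost, h1, h2]
      · have hc : cutCost c a N (shiftSeq k f) = entryBound (f k) + |a| := by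
          simp [cutCost, h1, shiftSeq]
        rw [hc]
        refine (Set.indicator_le_self' (fun k _ => add_nonneg (entryBound_nonneg _)
          (abs_nonneg _)) k).trans (le_add_of_nonneg_right ?_)
        split_ifs
        · exact h0
        · exact le_rfl)

lemma integrable_cutError (hX : Integrable entryBound ν) (c : Set (Fin d)) (a : ℝ) (N n : ℕ) :
    Integrable (cutError c a N n) (seqLaw ν) := by
  refine integrable_finsetSum _ fun k _ => Integrable.add ?_ ?_
  · exact (measurePreserving_shiftSeq ν k).integrable_comp_of_integrable
      (integrable_cutCost hX c a N)
  · split_ifs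
    · exact (integrable_entryBound_eval hX k).add (integrable_const _)
    · exact integrable_zero _ _ _

lemma integral_cutError_le (hX : Integrable entryBound ν) (c : Set (Fin d)) (a : ℝ) (N n : ℕ) :
    ∫ f, cutError c a N n f ∂(seqLaw ν) ≤
      n * ∫ f, cutCost c a N f ∂(seqLaw ν) + N * (∫ M, entryBound M ∂ν + |a|) := by
  have hY : 0 ≤ ∫ M, entryBound M ∂ν + |a| :=
    add_nonneg (integral_nonneg entryBound_nonneg) (abs_nonneg a)
  have h1 : ∀ k, Integrable (fun f => cutCost c a N (shiftSeq k f)) (seqLaw ν) := fun k =>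
    (measurePreserving_shiftSeq ν k).integrable_comp_of_integrable (integrable_cutCost hX c a N)
  have h2 : ∀ k, Integrable (fun f : ℕ → Fin d → Fin d → EReal =>
      if n ≤ k + N then entryBound (f k) + |a| else 0) (seqLaw ν) := by
    intro k
    split_ifs
    · exact (integrable_entryBound_eval hX k).add (integrable_const _)
    · exact integrable_zero _ _ _
  have h3 : ∀ k, ∫ f, cutCost c a N (shiftSeq k f) ∂(seqLaw ν) =
      ∫ f, cutCost c a N f ∂(seqLaw ν) := by
    intro k
    conv_rhs => rw [← (measurePreserving_shiftSeq ν k).map_eq]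
    rw [integral_map (measurable_shiftSeq k).aemeasurable
      (measurable_cutCost c a N).aestronglyMeasurable]
  have h4 : ∀ k, ∫ f, (if n ≤ k + N then entryBound (f k) + |a| else 0) ∂(seqLaw ν) =
      if n ≤ k + N then ∫ M, entryBound M ∂ν + |a| else 0 := by
    intro k
    split_ifs
    · rw [integral_add (integrable_entryBound_eval hX k) (integrable_const _),
        integral_entryBound_eval]
      simp
    · simp
  simp only [cutError]
  rw [integral_finsetSum _ fun k _ => (h1 k).fun_add (h2 k)]
  simp only [integral_add (h1 _) (h2 _), h3, h4, Finset.sum_add_distrib, Finset.sum_const,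
    Finset.card_range, nsmul_eq_mul]
  refine add_le_add_right ?_ _
  rw [← Finset.sum_filter, Finset.sum_const, nsmul_eq_mul]
  refine mul_le_mul_of_nonneg_right ?_ hY
  have hsub : (Finset.range n).filter (fun k => n ≤ k + N) ⊆ Finset.Ico (n - N) n := by
    intro k hk
    simp only [Finset.mem_filter, Finset.mem_range, Finset.mem_Ico] at hk ⊢
    omega
  have := Finset.card_le_card hsub
  rw [Nat.card_Ico] at this
  exact_mod_cast (by omega : _ ≤ N)

/-- If the products inside `c` grow faster than `b` in probability, then for `a < b` the speed `a`
is exceeded forever with positive probability from some node of `c`. -/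
lemma exists_measure_growthSet_ne_zero (htop : ∀ᵐ M ∂ν, ∀ i j, M i j ≠ ⊤)
    (hX : Integrable entryBound ν) {c : Set (Fin d)} {a b : ℝ} (hab : a < b)
    (hb : Tendsto (fun n => seqLaw ν (exceedSet c b n)ᶜ) atTop (𝓝 0)) :
    ∃ i ∈ c, seqLaw ν (growthSet i a) ≠ 0 := by
  by_contra! hcon
  obtain ⟨N, hN⟩ := ((tendsto_integral_cutCost hX hcon).eventually_lt_const
    (show (0 : ℝ) < (b - a) / 8 by linarith)).exists
  set Y := ∫ M, entryBound M ∂ν + |a|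
  obtain ⟨n₀, hn₀⟩ := exists_nat_ge (N * Y / ((b - a) / 8))
  obtain ⟨n, hn, hlt⟩ := ((eventually_ge_atTop (n₀ + 1)).and
    (hb.eventually_lt_const (show (0 : ENNReal) < 2⁻¹ by simp))).exists
  have hn0 : (0 : ℝ) < n := by exact_mod_cast (by omega : 0 < n)
  have hnn : (n₀ : ℝ) ≤ n := by exact_mod_cast (by omega : n₀ ≤ n)
  have hNY : N * Y ≤ n * ((b - a) / 8) :=
    (div_le_iff₀ (by linarith)).1 (hn₀.trans hnn)
  have hmarkov := mul_meas_ge_le_integral_of_nonneg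
    (Eventually.of_forall (cutError_nonneg c a N n)) (integrable_cutError hX c a N n)
    ((b - a) * n)
  have hint := integral_cutError_le hX c a N n
  have hsub : (seqLaw ν).real (exceedSet c b n) ≤
      (seqLaw ν).real {f | (b - a) * n ≤ cutError c a N n f} := by
    refine ENNReal.toReal_mono (measure_ne_top _ _) (measure_mono_ae ?_)
    filter_upwards [ae_forall_le_entryBound htop] with f hf hfe
    obtain ⟨i, -, hi⟩ := hfe
    have := EReal.coe_lt_coe_iff.1
      (hi.trans_le (lvec_restrictSeq_le_cutError (a := a) (N := N) hf i))
    show (b - a) * n ≤ cutError c a N n f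
    linarith
  have hcompl : (seqLaw ν).real (exceedSet c b n)ᶜ < 2⁻¹ := by
    have := (ENNReal.toReal_lt_toReal (measure_ne_top _ _) (by simp)).2 hlt
    simpa [measureReal_def] using this
  rw [probReal_compl_eq_one_sub (measurableSet_exceedSet c b n)] at hcompl
  have hbig : 1 / 2 < (seqLaw ν).real {f | (b - a) * n ≤ cutError c a N n f} := by linarith
  have hpos : 0 < (b - a) * n := mul_pos (by linarith) hn0
  nlinarith

end LowerBound

section UpperBound

lemma exists_affine_bound_of_tendsto_average {u : ℕ → ℝ} {l η : ℝ} (hη : 0 < η)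
    (h : Tendsto (fun n : ℕ => (∑ k ∈ Finset.range n, u k) / n) atTop (𝓝 l)) :
    ∃ C : ℝ, 0 ≤ C ∧ ∀ k : ℕ, u k ≤ η * k + C := by
  obtain ⟨n₀, hn₀⟩ := eventually_atTop.1 ((h.eventually_lt_const
    (show l < l + η / 2 by linarith)).and (h.eventually_const_lt
    (show l - η / 2 < l by linarith)))
  have hsum : 0 ≤ ∑ k ∈ Finset.range (n₀ + 1), |u k| := Finset.sum_nonneg fun _ _ => abs_nonneg _
  refine ⟨|l| + η / 2 + ∑ k ∈ Finset.range (n₀ + 1), |u k|, by positivity, fun k => ?_⟩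
  rcases lt_or_ge k (n₀ + 1) with hk | hk
  · have h1 := Finset.single_le_sum (f := fun k => |u k|) (fun _ _ => abs_nonneg _)
      (Finset.mem_range.2 hk)
    have h2 : u k ≤ |u k| := le_abs_self _
    have h3 : 0 ≤ η * k := by positivity
    have h4 := abs_nonneg l
    linarith
  · have hk0 : (0 : ℝ) < k := by exact_mod_cast (by omega : 0 < k)
    have h1 := (hn₀ (k + 1) (by omega)).1
    have h2 := (hn₀ k (by omega)).2
    push_cast at h1
    rw [div_lt_iff₀ (by linarith), Finset.sum_range_succ] at h1
    rw [lt_div_iff₀ hk0] at h2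
    have h3 := le_abs_self l
    nlinarith

lemma exists_integral_excess_lt {α : Type*} [MeasurableSpace α] {ν : Measure α} {X : α → ℝ}
    (hX : Integrable X ν) (h0 : ∀ x, 0 ≤ X x) {ε : ℝ} (hε : 0 < ε) :
    ∃ T : ℝ, 0 ≤ T ∧ ∫ x, max (X x - T) 0 ∂ν < ε := by
  have h := tendsto_integral_of_dominated_convergence (μ := ν)
    (F := fun (T : ℕ) x => max (X x - T) 0) (f := fun _ => 0) X
    (fun T => ((hX.aestronglyMeasurable.sub aestronglyMeasurable_const).sup
      aestronglyMeasurable_const))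
    hX
    (fun T => Eventually.of_forall fun x => by
      rw [Real.norm_of_nonneg (le_max_right _ _)]
      exact max_le (by have := T.cast_nonneg (α := ℝ); linarith) (h0 x))
    (Eventually.of_forall fun x => by
      refine tendsto_const_nhds.congr' ?_
      obtain ⟨T₀, hT₀⟩ := exists_nat_ge (X x)
      filter_upwards [eventually_ge_atTop T₀] with T hT
      have : (T₀ : ℝ) ≤ T := by exact_mod_cast hT
      rw [max_eq_right (by linarith)])
  rw [integral_zero] at h
  obtain ⟨T, hT⟩ := (h.eventually_lt_const hε).exists
  exact ⟨T, T.cast_nonneg, hT⟩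

variable {d : ℕ}

/-- The total weight bound of the first `N` matrices of a sequence. -/
def blockBound (N : ℕ) (f : ℕ → Fin d → Fin d → EReal) : ℝ :=
  ∑ k ∈ Finset.range N, entryBound (f k)

lemma blockBound_nonneg (N : ℕ) (f : ℕ → Fin d → Fin d → EReal) : 0 ≤ blockBound N f :=
  Finset.sum_nonneg fun _ _ => entryBound_nonneg _

lemma dependsOnFirst_blockBound (N : ℕ) : DependsOnFirst N (blockBound (d := d) N) :=
  fun _ _ h => Finset.sum_congr rfl fun k hk => by rw [h k (Finset.mem_range.1 hk)]

lemma measurable_blockBound (N : ℕ) : Measurable (blockBound (d := d) N) :=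
  Finset.measurable_sum _ fun k _ => measurable_entryBound.comp (measurable_pi_apply k)

lemma lvec_le_blockBound {n N : ℕ} (hn : n ≤ N) {f : ℕ → Fin d → Fin d → EReal}
    (hf : ∀ k i j, f k i j ≤ (entryBound (f k) : EReal)) (i : Fin d) :
    lvec n f i ≤ (blockBound N f : EReal) :=
  (lvec_le_sum hf i).trans <| EReal.coe_le_coe_iff.2 <|
    Finset.sum_le_sum_of_subset_of_nonneg (Finset.range_mono hn) fun _ _ _ => entryBound_nonneg _

/-- The sequences for which the product of length `N` inside some component reachable from `o`
exceeds `m * N`. -/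
def reachExceedSet (r : Fin d → Fin d → Prop) (o : Fin d) (m : ℝ) (N : ℕ) :
    Set (ℕ → Fin d → Fin d → EReal) :=
  ⋃ i, ⋃ (_ : Relation.ReflTransGen r o i), exceedSet (sccOf r i) m N

lemma measurableSet_reachExceedSet (r : Fin d → Fin d → Prop) (o : Fin d) (m : ℝ) (N : ℕ) :
    MeasurableSet (reachExceedSet r o m N) :=
  MeasurableSet.iUnion fun _ => MeasurableSet.iUnion fun _ => measurableSet_exceedSet _ _ _

lemma dependsOnFirst_reachExceedSet (r : Fin d → Fin d → Prop) (o : Fin d) (m : ℝ) (N : ℕ) :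
    DependsOnFirst N (· ∈ reachExceedSet r o m N) := by
  intro f g h
  simp only [reachExceedSet, exceedSet, Set.mem_iUnion, Set.mem_ofPred_eq,
    fun c => dependsOnFirst_lvec_restrictSeq c N f g h]

/-- A bound on the weight of a block of length `N` inside any component reachable from `o`. -/
def blockCost (r : Fin d → Fin d → Prop) (o : Fin d) (m : ℝ) (N : ℕ)
    (f : ℕ → Fin d → Fin d → EReal) : ℝ :=
  m * N + (reachExceedSet r o m N).indicator (fun f => |m| * N + blockBound N f) f

lemma dependsOnFirst_blockCost (r : Fin d → Fin d → Prop) (o : Fin d) (m : ℝ) (N : ℕ) :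
    DependsOnFirst N (blockCost r o m N) := by
  classical
  intro f g h
  have h1 := dependsOnFirst_blockBound N f g h
  have h2 := dependsOnFirst_reachExceedSet r o m N f g h
  simp only [blockCost, Set.indicator_apply, h1]
  simp only at h2
  simp only [h2]

lemma measurable_blockCost (r : Fin d → Fin d → Prop) (o : Fin d) (m : ℝ) (N : ℕ) :
    Measurable (blockCost r o m N) :=
  (((measurable_blockBound N).const_add _).indicator
    (measurableSet_reachExceedSet r o m N)).const_add _

lemma le_blockCost (r : Fin d → Fin d → Prop) (o : Fin d) (m : ℝ) (N : ℕ)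
    (f : ℕ → Fin d → Fin d → EReal) : -(|m| * N) ≤ blockCost r o m N f := by
  have h1 : 0 ≤ (reachExceedSet r o m N).indicator (fun f => |m| * N + blockBound N f) f :=
    Set.indicator_nonneg (fun f _ => add_nonneg (by positivity) (blockBound_nonneg N f)) f
  have h2 := neg_abs_le m
  have h3 : (0 : ℝ) ≤ N := N.cast_nonneg
  unfold blockCost
  nlinarith

lemma lvec_le_blockCost {r : Fin d → Fin d → Prop} {o i : Fin d} (hi : Relation.ReflTransGen r o i)
    (m : ℝ) (N : ℕ) {f : ℕ → Fin d → Fin d → EReal}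
    (hf : ∀ k i j, f k i j ≤ (entryBound (f k) : EReal)) :
    lvec N (restrictSeq (sccOf r i) f) i ≤ (blockCost r o m N f : EReal) := by
  by_cases hfb : f ∈ reachExceedSet r o m N
  · refine (lvec_restrictSeq_le _ N f i).trans ((lvec_le_blockBound le_rfl hf i).trans ?_)
    refine EReal.coe_le_coe_iff.2 ?_
    simp only [blockCost, Set.indicator_of_mem hfb]
    have h2 := neg_abs_le m
    have h3 : (0 : ℝ) ≤ N := N.cast_nonneg
    nlinarith
  · simp only [blockCost, Set.indicator_of_notMem hfb, add_zero]
    by_contra! hlt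
    exact hfb (Set.mem_iUnion₂.2 ⟨i, hi, i, mem_sccOf_self r i, hlt⟩)

variable {ν : Measure (Fin d → Fin d → EReal)}

lemma tendsto_measure_reachExceedSet {r : Fin d → Fin d → Prop} {o : Fin d} {m : ℝ}
    (h : ∀ i, Relation.ReflTransGen r o i →
      Tendsto (fun n => seqLaw ν (exceedSet (sccOf r i) m n)) atTop (𝓝 0)) :
    Tendsto (fun n => seqLaw ν (reachExceedSet r o m n)) atTop (𝓝 0) := by
  classical
  have hsum : Tendsto (fun n => ∑ i, if Relation.ReflTransGen r o i then
      seqLaw ν (exceedSet (sccOf r i) m n) else 0) atTop (𝓝 0) := by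
    have := tendsto_finsetSum (Finset.univ : Finset (Fin d))
      (f := fun i n => if Relation.ReflTransGen r o i then
        seqLaw ν (exceedSet (sccOf r i) m n) else 0) (x := atTop) (a := fun _ => 0) (by
      intro i _
      split_ifs with hi
      · exact h i hi
      · exact tendsto_const_nhds)
    simpa using this
  refine tendsto_of_tendsto_of_tendsto_of_le_of_le tendsto_const_nhds hsum (fun _ => zero_le)
    fun n => ?_
  refine (measure_iUnion_fintype_le _ _).trans (Finset.sum_le_sum fun i _ => ?_)
  split_ifs with hi <;> simp [hi]

variable [IsProbabilityMeasure ν]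

lemma integrable_blockBound (hX : Integrable entryBound ν) (N : ℕ) :
    Integrable (blockBound N) (seqLaw ν) :=
  integrable_finsetSum _ fun k _ => integrable_entryBound_eval hX k

lemma integrable_blockCost (hX : Integrable entryBound ν) (r : Fin d → Fin d → Prop) (o : Fin d)
    (m : ℝ) (N : ℕ) : Integrable (blockCost r o m N) (seqLaw ν) :=
  (integrable_const _).add (((integrable_const _).add (integrable_blockBound hX N)).indicator
    (measurableSet_reachExceedSet r o m N))

lemma exists_integral_blockCost_le (hX : Integrable entryBound ν) {r : Fin d → Fin d → Prop}
    {o : Fin d} {m : ℝ} (h : ∀ i, Relation.ReflTransGen r o i →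
      Tendsto (fun n => seqLaw ν (exceedSet (sccOf r i) m n)) atTop (𝓝 0)) {ε : ℝ} (hε : 0 < ε) :
    ∃ N : ℕ, 0 < N ∧ ∫ f, blockCost r o m N f ∂(seqLaw ν) ≤ (m + 2 * ε) * N := by
  obtain ⟨T, hT0, hT⟩ := exists_integral_excess_lt hX entryBound_nonneg hε
  have hlim : Tendsto (fun n => (|m| + T) * (seqLaw ν).real (reachExceedSet r o m n))
      atTop (𝓝 0) := by
    have := (ENNReal.tendsto_toReal ENNReal.zero_ne_top).comp (tendsto_measure_reachExceedSet h)
    simpa [measureReal_def] using this.const_mul (|m| + T)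
  obtain ⟨N, hN0, hN⟩ := ((eventually_gt_atTop 0).and (hlim.eventually_lt_const hε)).exists
  refine ⟨N, hN0, ?_⟩
  set B := reachExceedSet r o m N
  have hBm : MeasurableSet B := measurableSet_reachExceedSet r o m N
  have hexc : Integrable (fun M : Fin d → Fin d → EReal => max (entryBound M - T) 0) ν :=
    (hX.sub (integrable_const T)).pos_part
  have hexck : ∀ k : ℕ, Integrable (fun f : ℕ → Fin d → Fin d → EReal =>
      max (entryBound (f k) - T) 0) (seqLaw ν) := fun k =>
    (measurePreserving_eval_seqLaw ν k).integrable_comp_of_integrable hexc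
  have hexci : ∀ k : ℕ, ∫ f : ℕ → Fin d → Fin d → EReal, max (entryBound (f k) - T) 0 ∂(seqLaw ν)
      = ∫ M, max (entryBound M - T) 0 ∂ν := by
    intro k
    conv_rhs => rw [← (measurePreserving_eval_seqLaw ν k).map_eq]
    rw [integral_map (measurable_pi_apply k).aemeasurable]
    rw [(measurePreserving_eval_seqLaw ν k).map_eq]
    exact hexc.aestronglyMeasurable
  have hle : ∀ f, blockCost r o m N f ≤ m * N + (B.indicator (fun _ => (|m| + T) * N) f +
      ∑ k ∈ Finset.range N, max (entryBound (f k) - T) 0) := by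
    intro f
    refine add_le_add_right ?_ _
    have hs : 0 ≤ ∑ k ∈ Finset.range N, max (entryBound (f k) - T) 0 :=
      Finset.sum_nonneg fun _ _ => le_max_right _ _
    by_cases hf : f ∈ B
    · rw [Set.indicator_of_mem hf, Set.indicator_of_mem hf]
      have : blockBound N f ≤ ∑ k ∈ Finset.range N, (T + max (entryBound (f k) - T) 0) :=
        Finset.sum_le_sum fun k _ => by
          have := le_max_left (entryBound (f k) - T) 0
          linarith
      rw [Finset.sum_add_distrib, Finset.sum_const, Finset.card_range, nsmul_eq_mul] at this
      linarith
    · rw [Set.indicator_of_notMem hf, Set.indicator_of_notMem hf]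
      linarith
  have hI1 : Integrable (B.indicator (fun _ => (|m| + T) * N)) (seqLaw ν) :=
    (integrable_const _).indicator hBm
  have hI2 : Integrable (fun f : ℕ → Fin d → Fin d → EReal =>
      ∑ k ∈ Finset.range N, max (entryBound (f k) - T) 0) (seqLaw ν) :=
    integrable_finsetSum _ fun k _ => hexck k
  have hN' : (0 : ℝ) ≤ N := N.cast_nonneg
  calc ∫ f, blockCost r o m N f ∂(seqLaw ν)
      ≤ ∫ f, (m * N + (B.indicator (fun _ => (|m| + T) * N) f +
          ∑ k ∈ Finset.range N, max (entryBound (f k) - T) 0)) ∂(seqLaw ν) :=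
        integral_mono (integrable_blockCost hX r o m N)
          ((integrable_const _).add (hI1.add hI2)) hle
    _ = m * N + ((seqLaw ν).real B * ((|m| + T) * N) +
          N * ∫ M, max (entryBound M - T) 0 ∂ν) := by
        rw [integral_add (integrable_const _) (hI1.fun_add hI2), integral_add hI1 hI2,
          integral_indicator_const _ hBm, integral_finsetSum _ fun k _ => hexck k]
        simp [hexci]
    _ ≤ (m + 2 * ε) * N := by nlinarith

/-- Almost sure upper bound for the growth of `lvec` from the growth in probability inside the
reachable components. -/
lemma eventually_lvec_le (htop : ∀ᵐ M ∂ν, ∀ i j, M i j ≠ ⊤) (hX : Integrable entryBound ν)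
    {r : Fin d → Fin d → Prop} (hr : ∀ᵐ M ∂ν, ∀ i j, M i j ≠ ⊥ → r i j) {o : Fin d} {m' m : ℝ}
    (hm : m' < m) (h : ∀ i, Relation.ReflTransGen r o i →
      Tendsto (fun n => seqLaw ν (exceedSet (sccOf r i) m' n)) atTop (𝓝 0)) :
    ∀ᵐ f ∂(seqLaw ν), ∀ᶠ n : ℕ in atTop, lvec n f o ≤ ((m * n : ℝ) : EReal) := by
  obtain ⟨ε, hε, hmε⟩ : ∃ ε : ℝ, 0 < ε ∧ m = m' + 4 * ε :=
    ⟨(m - m') / 4, by linarith, by ring⟩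
  obtain ⟨N, hN0, hN⟩ := exists_integral_blockCost_le hX h hε
  have hNpos : (0 : ℝ) < N := by exact_mod_cast hN0
  have hrk : ∀ᵐ f ∂(seqLaw ν), ∀ k i j, f k i j ≠ ⊥ → r i j := by
    rw [ae_all_iff]
    exact fun k => (measurePreserving_eval_seqLaw ν k).quasiMeasurePreserving.ae hr
  filter_upwards [ae_forall_le_entryBound htop, hrk,
    tendsto_blockAverage hN0 (measurable_blockCost r o m' N) (integrable_blockCost hX r o m' N)
      (dependsOnFirst_blockCost r o m' N),
    tendsto_blockAverage hN0 (measurable_blockBound N) (integrable_blockBound hX N)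
      (dependsOnFirst_blockBound N)] with f hf hfr hcost hbound
  have hd : (0 : ℝ) < d + 1 := by positivity
  obtain ⟨η, hη, hdη⟩ : ∃ η : ℝ, 0 < η ∧ (d + 1) * η = ε * N / 2 :=
    ⟨ε * N / 2 / (d + 1), by positivity, by field_simp⟩
  obtain ⟨C, hC0, hC⟩ := exists_affine_bound_of_tendsto_average hη hbound
  obtain ⟨n₀, hn₀⟩ := eventually_atTop.1 (hcost.eventually_lt_const
    (show _ < (m' + 3 * ε) * N by nlinarith))
  obtain ⟨n₁, hn₁⟩ := exists_nat_ge (((d + 1) * C + d * (|m'| * N) + |m| * N) / (ε * N / 2))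
  filter_upwards [eventually_ge_atTop ((n₀ + n₁ + 1) * N)] with t ht
  set n := t / N with hn
  have htn : n * N + t % N = t := by rw [mul_comm]; exact Nat.div_add_mod t N
  have hmod : t % N < N := Nat.mod_lt t hN0
  have hnge : n₀ + n₁ + 1 ≤ n := (Nat.le_div_iff_mul_le hN0).2 ht
  have hn0 : (0 : ℝ) < n := by exact_mod_cast (by omega : 0 < n)
  have hshift : ∀ s k i j, shiftSeq s f k i j ≤ (entryBound (shiftSeq s f k) : EReal) :=
    fun s k i j => hf (k + s) i j
  have hmain := appProd_blocks_le (r := r) (f := f) (x := fun k => entryBound (f k))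
    (v := lvec (t % N) (shiftSeq (n * N) f)) (V := η * n + C) (Q := η * n + C + |m'| * N)
    (D := fun k => blockCost r o m' N (shiftSeq (k * N) f)) (N := N) (n := n) (o := o) hf hfr
    (fun j => (lvec_le_blockBound hmod.le (hshift _) j).trans (EReal.coe_le_coe_iff.2 (hC n)))
    (by positivity)
    (fun k _ i hi => lvec_le_blockCost hi m' N (hshift _))
    (fun k hk => by
      have h1 : ∑ l ∈ Finset.range N, entryBound (f (l + k * N)) ≤ η * k + C := hC k
      have h2 := le_blockCost r o m' N (shiftSeq (k * N) f)
      have h3 : η * k ≤ η * n := by gcongr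
      linarith)
  have hlt : lvec t f o = appProd (n * N) f (lvec (t % N) (shiftSeq (n * N) f)) o := by
    conv_lhs => rw [← htn]
    exact congrFun (appProd_add _ _ _ _) o
  rw [hlt]
  refine hmain.trans (EReal.coe_le_coe_iff.2 ?_)
  have hsum := (div_lt_iff₀ hn0).1 (hn₀ n (by omega))
  have h1 : (n₁ : ℝ) ≤ n := by exact_mod_cast (by omega : n₁ ≤ n)
  have h2 := (div_le_iff₀ (by positivity)).1 (hn₁.trans h1)
  have h3 : (t : ℝ) = n * N + (t % N : ℕ) := by exact_mod_cast htn.symm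
  have h4 : -(|m| * N) ≤ m * (t % N : ℕ) := by
    have h5 : ((t % N : ℕ) : ℝ) ≤ N := by exact_mod_cast hmod.le
    have h6 : (0 : ℝ) ≤ (t % N : ℕ) := Nat.cast_nonneg _
    have h7 := neg_abs_le m
    have h8 := abs_nonneg m
    nlinarith
  have h9 : d * (η * n) + η * n = ε * N / 2 * n := by rw [← hdη]; ring
  have h10 : m * t = (m' + 3 * ε) * N * n + 2 * (ε * N / 2 * n) + m * (t % N : ℕ) := by
    rw [h3, hmε]; ring
  have h11 : (d : ℝ) * (η * n + C + |m'| * N) = d * (η * n) + d * C + d * (|m'| * N) := by ring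
  rw [h10, h11]
  linarith

end UpperBound

section Graph

variable {d : ℕ} {r : Fin d → Fin d → Prop} {γ : Set (Fin d) → EReal}

lemma isSCC_and_nodeReach_iff {i : Fin d} {c : Set (Fin d)} :
    IsSCC r c ∧ nodeReach r i c ↔ ∃ j, Relation.ReflTransGen r i j ∧ c = sccOf r j := by
  constructor
  · rintro ⟨⟨j, rfl⟩, k, hk, hik⟩
    exact ⟨j, hik.trans hk.2, rfl⟩
  · rintro ⟨j, hij, rfl⟩
    exact ⟨isSCC_sccOf r j, j, mem_sccOf_self r j, hij⟩

lemma sccReach_sccOf_iff {i : Fin d} {c : Set (Fin d)} :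
    sccReach r (sccOf r i) c ↔ nodeReach r i c := by
  constructor
  · rintro ⟨k, hk, j, hj, hkj⟩
    exact ⟨j, hj, hk.1.trans hkj⟩
  · exact fun h => ⟨i, mem_sccOf_self r i, h⟩

lemma gammaBrack_sccOf (i : Fin d) : gammaBrack r γ (sccOf r i) = limFormula r γ i := by
  simp only [gammaBrack, limFormula, sccReach_sccOf_iff]

lemma le_limFormula {i j : Fin d} (hij : Relation.ReflTransGen r i j) :
    γ (sccOf r j) ≤ limFormula r γ i :=
  le_iSup₂_of_le (sccOf r j) (isSCC_and_nodeReach_iff.2 ⟨j, hij, rfl⟩) le_rfl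

lemma exists_eq_limFormula (r : Fin d → Fin d → Prop) (γ : Set (Fin d) → EReal) (i : Fin d) :
    ∃ j, Relation.ReflTransGen r i j ∧ γ (sccOf r j) = limFormula r γ i := by
  obtain ⟨j, hj, hmax⟩ := (Set.toFinite {j | Relation.ReflTransGen r i j}).exists_maximalFor
    (fun j => γ (sccOf r j)) _ ⟨i, .refl⟩
  refine ⟨j, hj, le_antisymm (le_limFormula hj) (iSup₂_le fun c hc => ?_)⟩
  obtain ⟨k, hik, rfl⟩ := isSCC_and_nodeReach_iff.1 hc
  rcases le_total (γ (sccOf r j)) (γ (sccOf r k)) with h | h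
  · exact hmax hik h
  · exact h

lemma limFormula_le_of_reach {i j : Fin d} (hij : Relation.ReflTransGen r i j) :
    limFormula r γ j ≤ limFormula r γ i := by
  obtain ⟨k, hjk, hk⟩ := exists_eq_limFormula r γ j
  exact hk ▸ le_limFormula (hij.trans hjk)

lemma mem_Hset_sccOf_iff {o i : Fin d} : i ∈ Hset r γ (sccOf r o) ↔
    Relation.ReflTransGen r o i ∧ limFormula r γ i = limFormula r γ o := by
  simp only [Hset, Set.mem_ofPred_eq, gammaBrack_sccOf]
  constructor
  · rintro ⟨c, hc, ⟨k, hk, hki⟩, hic, hγ⟩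
    obtain ⟨j, hij, rfl⟩ := isSCC_and_nodeReach_iff.1 ⟨hc, hic⟩
    have hoi := hk.1.trans hki
    exact ⟨hoi, le_antisymm (limFormula_le_of_reach hoi) (hγ ▸ le_limFormula hij)⟩
  · rintro ⟨hoi, h⟩
    obtain ⟨j, hij, hj⟩ := exists_eq_limFormula r γ i
    exact ⟨sccOf r j, isSCC_sccOf r j, ⟨o, mem_sccOf_self r o, hoi⟩,
      ⟨j, mem_sccOf_self r j, hij⟩, hj.trans h⟩

end Graph

section IIDSequence

variable {d : ℕ} {ν : Measure (Fin d → Fin d → EReal)} [IsProbabilityMeasure ν]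
  {r : Fin d → Fin d → Prop} {γ : Set (Fin d) → EReal}

lemma eventually_lvec_le_of_limFormula_lt (htop : ∀ᵐ M ∂ν, ∀ i j, M i j ≠ ⊤)
    (hX : Integrable entryBound ν) (hr : ∀ᵐ M ∂ν, ∀ i j, M i j ≠ ⊥ → r i j)
    (hup : ∀ i, ∀ b : ℝ, γ (sccOf r i) < b →
      Tendsto (fun n => seqLaw ν (exceedSet (sccOf r i) b n)) atTop (𝓝 0))
    {i : Fin d} {m : ℝ} (hm : limFormula r γ i < m) :
    ∀ᵐ f ∂(seqLaw ν), ∀ᶠ n : ℕ in atTop, lvec n f i ≤ ((m * n : ℝ) : EReal) := by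
  obtain ⟨m', hm', hm'm⟩ := EReal.lt_iff_exists_real_btwn.1 hm
  exact eventually_lvec_le htop hX hr (EReal.coe_lt_coe_iff.1 hm'm)
    fun j hj => hup j m' ((le_limFormula hj).trans_lt hm')

lemma measure_growthSet_ne_zero_of_lt_limFormula (htop : ∀ᵐ M ∂ν, ∀ i j, M i j ≠ ⊤)
    (hX : Integrable entryBound ν) (hr : ∀ i j, r i j → ν {M | M i j ≠ ⊥} ≠ 0)
    (hlow : ∀ i, ∀ b : ℝ, (b : EReal) < γ (sccOf r i) →
      Tendsto (fun n => seqLaw ν (exceedSet (sccOf r i) b n)ᶜ) atTop (𝓝 0))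
    {i : Fin d} {a : ℝ} (ha : (a : EReal) < limFormula r γ i) :
    seqLaw ν (growthSet i a) ≠ 0 := by
  obtain ⟨j, hij, hj⟩ := exists_eq_limFormula r γ i
  obtain ⟨b, hab, hb⟩ := EReal.lt_iff_exists_real_btwn.1 ha
  obtain ⟨k, hk, hpos⟩ := exists_measure_growthSet_ne_zero htop hX (EReal.coe_lt_coe_iff.1 hab)
    (hlow j b (hj ▸ hb))
  exact measure_growthSet_ne_zero_of_reach hr (hij.trans hk.1) hpos

lemma mpScale_le {n : ℕ} (hn : 0 < n) {y : EReal} {m : ℝ} (h : y ≤ ((m * n : ℝ) : EReal)) :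
    mpScale n y ≤ m :=
  not_lt.1 fun hlt => ((lt_mpScale_iff hn).1 hlt).not_ge h

/-- Convergence to the limit formula when the rows indexed by each `H_c` stay finite. -/
lemma ae_tendsto_limFormula (htop : ∀ᵐ M ∂ν, ∀ i j, M i j ≠ ⊤) (hX : Integrable entryBound ν)
    (hr : ∀ᵐ M ∂ν, ∀ i j, M i j ≠ ⊥ → r i j) (hr' : ∀ i j, r i j → ν {M | M i j ≠ ⊥} ≠ 0)
    (hup : ∀ i, ∀ b : ℝ, γ (sccOf r i) < b →
      Tendsto (fun n => seqLaw ν (exceedSet (sccOf r i) b n)) atTop (𝓝 0))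
    (hlow : ∀ i, ∀ b : ℝ, (b : EReal) < γ (sccOf r i) →
      Tendsto (fun n => seqLaw ν (exceedSet (sccOf r i) b n)ᶜ) atTop (𝓝 0)) {i : Fin d}
    (hH : ∀ᵐ M ∂ν, ∀ k ∈ Hset r γ (sccOf r i), ∃ j ∈ Hset r γ (sccOf r i), M k j ≠ ⊥) :
    ∀ᵐ f ∂(seqLaw ν), Tendsto (fun n => mpScale n (lvec n f i)) atTop (𝓝 (limFormula r γ i)) := by
  have hlower : ∀ᵐ f ∂(seqLaw ν), ∀ q : ℚ, ((q : ℝ) : EReal) < limFormula r γ i →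
      f ∈ growthSet i q := by
    rw [ae_all_iff]
    intro q
    by_cases hq : ((q : ℝ) : EReal) < limFormula r γ i
    · have := ae_mem_growthSet (a := q) hH (fun j hj =>
        measure_growthSet_ne_zero_of_lt_limFormula htop hX hr' hlow
          (by rwa [(mem_Hset_sccOf_iff.1 hj).2])) (mem_Hset_sccOf_iff.2 ⟨.refl, rfl⟩)
      filter_upwards [this] with f hf _ using hf
    · exact Eventually.of_forall fun f h => absurd h hq
  have hupper : ∀ᵐ f ∂(seqLaw ν), ∀ q : ℚ, limFormula r γ i < ((q : ℝ) : EReal) →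
      ∀ᶠ n : ℕ in atTop, lvec n f i ≤ ((q * n : ℝ) : EReal) := by
    rw [ae_all_iff]
    intro q
    by_cases hq : limFormula r γ i < ((q : ℝ) : EReal)
    · filter_upwards [eventually_lvec_le_of_limFormula_lt htop hX hr hup hq] with f hf _ using hf
    · exact Eventually.of_forall fun f h => absurd h hq
  filter_upwards [hlower, hupper] with f hl hu
  rw [tendsto_order]
  constructor
  · intro b hb
    obtain ⟨p, hbp, hp⟩ := EReal.lt_iff_exists_real_btwn.1 hb
    obtain ⟨q, hpq, hq⟩ := EReal.lt_iff_exists_rat_btwn.1 hp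
    filter_upwards [eventually_lt_mpScale_of_mem_growthSet (hl q hq)
      (EReal.coe_lt_coe_iff.1 hpq)] with n hn using hbp.trans hn
  · intro b hb
    obtain ⟨q, hq, hqb⟩ := EReal.lt_iff_exists_rat_btwn.1 hb
    filter_upwards [hu q hq, eventually_gt_atTop 0] with n hn hn0
      using (mpScale_le hn0 hn).trans_lt hqb

lemma limFormula_le_of_ae_tendsto (htop : ∀ᵐ M ∂ν, ∀ i j, M i j ≠ ⊤)
    (hX : Integrable entryBound ν) (hr' : ∀ i j, r i j → ν {M | M i j ≠ ⊥} ≠ 0)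
    (hlow : ∀ i, ∀ b : ℝ, (b : EReal) < γ (sccOf r i) →
      Tendsto (fun n => seqLaw ν (exceedSet (sccOf r i) b n)ᶜ) atTop (𝓝 0)) {i : Fin d} {L : EReal}
    (hL : ∀ᵐ f ∂(seqLaw ν), Tendsto (fun n => mpScale n (lvec n f i)) atTop (𝓝 L)) :
    limFormula r γ i ≤ L := by
  by_contra! hlt
  obtain ⟨a, hLa, ha⟩ := EReal.lt_iff_exists_real_btwn.1 hlt
  obtain ⟨f, hfa, hfL⟩ := ((frequently_ae_mem_iff.2
    (measure_growthSet_ne_zero_of_lt_limFormula htop hX hr' hlow ha)).and_eventually hL).exists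
  exact hLa.not_ge (le_of_tendsto_of_mem_growthSet hfa hfL)

/-- If the limit at node `i` is deterministic, a row of `H_c` cannot leave `H_c` entirely. -/
lemma ae_exists_mem_Hset_of_ae_tendsto (htop : ∀ᵐ M ∂ν, ∀ i j, M i j ≠ ⊤)
    (hX : Integrable entryBound ν) (hrow : ∀ᵐ M ∂ν, ∀ i, ∃ j, M i j ≠ ⊥)
    (hr : ∀ᵐ M ∂ν, ∀ i j, M i j ≠ ⊥ → r i j) (hr' : ∀ i j, r i j → ν {M | M i j ≠ ⊥} ≠ 0)
    (hup : ∀ i, ∀ b : ℝ, γ (sccOf r i) < b →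
      Tendsto (fun n => seqLaw ν (exceedSet (sccOf r i) b n)) atTop (𝓝 0))
    (hlow : ∀ i, ∀ b : ℝ, (b : EReal) < γ (sccOf r i) →
      Tendsto (fun n => seqLaw ν (exceedSet (sccOf r i) b n)ᶜ) atTop (𝓝 0)) {i o : Fin d}
    {L : EReal}
    (hL : ∀ᵐ f ∂(seqLaw ν), Tendsto (fun n => mpScale n (lvec n f i)) atTop (𝓝 L))
    (hi : i ∈ Hset r γ (sccOf r o)) :
    ∀ᵐ M ∂ν, ∃ j ∈ Hset r γ (sccOf r o), M i j ≠ ⊥ := by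
  obtain ⟨hoi, hgi⟩ := mem_Hset_sccOf_iff.1 hi
  have hgL := limFormula_le_of_ae_tendsto htop hX hr' hlow hL
  set J : Set (Fin d) := {j | r i j ∧ j ∉ Hset r γ (sccOf r o)} with hJ
  have hJlt : ∀ j ∈ J, limFormula r γ j < limFormula r γ i := by
    rintro j ⟨hij, hj⟩
    have hoj := hoi.tail hij
    refine lt_of_le_of_ne (limFormula_le_of_reach (.single hij)) fun h => hj ?_
    exact mem_Hset_sccOf_iff.2 ⟨hoj, h.trans hgi⟩
  rcases J.eq_empty_or_nonempty with hJ0 | hJne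
  · filter_upwards [hrow, hr] with M hM hMr
    obtain ⟨j, hj⟩ := hM i
    refine ⟨j, by_contra fun hjH => ?_, hj⟩
    have : j ∈ J := ⟨hMr i j hj, hjH⟩
    simp [hJ0] at this
  obtain ⟨j₀, hj₀, hmax⟩ := (Set.toFinite J).exists_maximalFor (limFormula r γ) J hJne
  have hmax' : ∀ j ∈ J, limFormula r γ j ≤ limFormula r γ j₀ := fun j hj =>
    (le_total (limFormula r γ j₀) (limFormula r γ j)).elim (hmax hj) id
  obtain ⟨m, hm, hmi⟩ := EReal.lt_iff_exists_real_btwn.1 (hJlt j₀ hj₀)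
  obtain ⟨m₂, hmm₂, hm₂⟩ := EReal.lt_iff_exists_real_btwn.1 hmi
  have hmm : m < m₂ := EReal.coe_lt_coe_iff.1 hmm₂
  have hUB : ∀ᵐ f ∂(seqLaw ν), ∀ j ∈ J, ∀ᶠ n : ℕ in atTop,
      lvec n (shiftSeq 1 f) j ≤ ((m * n : ℝ) : EReal) := by
    rw [ae_all_iff]
    intro j
    by_cases hj : j ∈ J
    · filter_upwards [(measurePreserving_shiftSeq ν 1).quasiMeasurePreserving.ae
        (eventually_lvec_le_of_limFormula_lt htop hX hr hup ((hmax' j hj).trans_lt hm))]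
        with f hf _ using hf
    · exact Eventually.of_forall fun f h => absurd h hj
  have hfin : ∀ᵐ f ∂(seqLaw ν), ∃ j ∈ Hset r γ (sccOf r o), f 0 i j ≠ ⊥ := by
    filter_upwards [hUB, hL, ae_forall_le_entryBound htop,
      (measurePreserving_eval_seqLaw ν 0).quasiMeasurePreserving.ae hr] with f hf hfL hfb hfr
    by_contra! hbot
    have hev : ∀ᶠ n : ℕ in atTop, ∀ j ∈ J, lvec n (shiftSeq 1 f) j ≤ ((m * n : ℝ) : EReal) :=
      (eventually_all_finite (Set.toFinite J)).2 hf
    obtain ⟨n₀, hn₀⟩ := exists_nat_ge ((entryBound (f 0) + |m₂|) / (m₂ - m))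
    have hle : ∀ᶠ n : ℕ in atTop, mpScale (n + 1) (lvec (n + 1) f i) ≤ m₂ := by
      filter_upwards [hev, eventually_ge_atTop n₀] with n hn hnn
      refine mpScale_le n.succ_pos ?_
      rw [lvec_succ, mpVec_le_iff]
      intro j
      by_cases hj : f 0 i j = ⊥
      · simp [hj]
      have hjJ : j ∈ J := ⟨hfr i j hj, fun h => hj (hbot j h)⟩
      refine (add_le_add (hfb 0 i j) (hn j hjJ)).trans ?_
      rw [← EReal.coe_add, EReal.coe_le_coe_iff]
      have h1 : (n₀ : ℝ) ≤ n := by exact_mod_cast hnn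
      have h2 := (div_le_iff₀ (by linarith)).1 (hn₀.trans h1)
      have h3 := neg_abs_le m₂
      push_cast
      nlinarith
    have hL₂ : L ≤ m₂ := le_of_tendsto ((tendsto_add_atTop_iff_nat 1).2 hfL) hle
    exact (hm₂.trans_le (hgL.trans hL₂)).false
  rw [← (measurePreserving_eval_seqLaw ν 0).map_eq]
  exact (ae_map_iff (measurable_pi_apply 0).aemeasurable (measurableSet_of_support
    fun p => ∃ j ∈ Hset r γ (sccOf r o), p i j)).2 hfin

end IIDSequence

/-- **Remark (independent case, right products).**
If `(A(n))_{n∈ℤ}` are i.i.d. random `d × d` matrices over `ℝ_max`, a.s. with at least one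
finite entry on each row, and `A(0) ⊗ 0` is integrable, then the a.s. limit of
`(1/n) y(n,0)` (which exists) is deterministic iff for every s.c.c. `c` of `𝒢(A)` the
submatrix of `A(0)` indexed by `H_c` a.s. has at least one finite entry on each row. -/
theorem y_limit_deterministic_iff_iid
    {d : ℕ} {Ω : Type*} [MeasurableSpace Ω] (μ : Measure Ω) [IsProbabilityMeasure μ]
    (A : ℤ → Ω → Fin d → Fin d → EReal)
    (hmeas : ∀ n, Measurable (A n))
    (hindep : iIndepFun A μ)
    (hident : ∀ n, μ.map (A n) = μ.map (A 0))
    (hnotop : ∀ n ω i j, A n ω i j ≠ ⊤)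
    (hrow : ∀ n, ∀ᵐ ω ∂μ, ∀ i, ∃ j, A n ω i j ≠ ⊥)
    (hint : ∀ i, Integrable (fun ω => (⨆ j, A 0 ω i j).toReal) μ)
    (γ : Set (Fin d) → EReal)
    (hγ : ∀ c : Set (Fin d), IsSCC (arcRel μ (A 0)) c →
      ∀ᵐ ω ∂μ, Tendsto
        (fun n => mpScale n
          (⨆ i, ⨆ (_ : i ∈ c), xvec (fun m => mpRestrict c (A (m : ℤ) ω)) n i))
        atTop (𝓝 (γ c))) :
    (∃ L : Fin d → EReal, ∀ᵐ ω ∂μ, ∀ i,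
        Tendsto (fun n => mpScale n (lvec n (fun k => A (-(k + 1) : ℤ) ω) i)) atTop (𝓝 (L i)))
      ↔
    (∀ c : Set (Fin d), IsSCC (arcRel μ (A 0)) c →
      ∀ᵐ ω ∂μ, ∀ i ∈ Hset (arcRel μ (A 0)) γ c, ∃ j ∈ Hset (arcRel μ (A 0)) γ c,
        A 0 ω i j ≠ ⊥) := by
  set r := arcRel μ (A 0)
  set ν := μ.map (A 0)
  have hA0 : AEMeasurable (A 0) μ := (hmeas 0).aemeasurable
  have : IsProbabilityMeasure ν := Measure.isProbabilityMeasure_map hA0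
  have htop : ∀ᵐ M ∂ν, ∀ i j, M i j ≠ ⊤ := by
    simp only [ae_all_iff]
    intro i j
    exact (ae_map_iff hA0 (((measurable_pi_apply j).comp (measurable_pi_apply i))
      (measurableSet_singleton ⊤).compl)).2 (Eventually.of_forall fun ω => hnotop 0 ω i j)
  have hX : Integrable entryBound ν :=
    (integrable_map_measure measurable_entryBound.aestronglyMeasurable hA0).2
      (integrable_finsetSum Finset.univ fun i _ => (hint i).abs)
  have hrow' : ∀ᵐ M ∂ν, ∀ i, ∃ j, M i j ≠ ⊥ :=
    (ae_map_iff hA0 (measurableSet_of_support fun p => ∀ i, ∃ j, p i j)).2 (hrow 0)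
  have harc : ∀ i j, ν {M | M i j ≠ ⊥} = μ {ω | A 0 ω i j ≠ ⊥} := fun i j =>
    Measure.map_apply (hmeas 0) (measurableSet_entry_ne_bot i j)
  have hr' : ∀ i j, r i j → ν {M | M i j ≠ ⊥} ≠ 0 := fun i j h => by rwa [harc]
  have hr : ∀ᵐ M ∂ν, ∀ i j, M i j ≠ ⊥ → r i j := by
    simp only [ae_all_iff]
    intro i j
    by_cases hij : r i j
    · exact Eventually.of_forall fun _ _ => hij
    · have h0 : ν {M | M i j ≠ ⊥} = 0 := by
        rw [harc]
        exact not_not.1 hij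
      filter_upwards [measure_eq_zero_iff_ae_notMem.1 h0] with M hM h using absurd h hM
  have hup : ∀ i, ∀ b : ℝ, γ (sccOf r i) < b →
      Tendsto (fun n => seqLaw ν (exceedSet (sccOf r i) b n)) atTop (𝓝 0) := fun i b hb =>
    tendsto_measure_exceedSet hmeas hindep hident (hγ _ (isSCC_sccOf r i)) hb
  have hlow : ∀ i, ∀ b : ℝ, (b : EReal) < γ (sccOf r i) →
      Tendsto (fun n => seqLaw ν (exceedSet (sccOf r i) b n)ᶜ) atTop (𝓝 0) := fun i b hb =>
    tendsto_measure_compl_exceedSet hmeas hindep hident (hγ _ (isSCC_sccOf r i)) hb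
  have hΦ : MeasurePreserving (fun ω (k : ℕ) => A (-(k + 1) : ℤ) ω) μ (seqLaw ν) :=
    measurePreserving_seqLaw hmeas hindep hident (e := fun k : ℕ => (-(k + 1) : ℤ))
      fun k l h => by simpa using h
  constructor
  · rintro ⟨L, hL⟩ c ⟨o, rfl⟩
    have hLP : ∀ i, ∀ᵐ f ∂(seqLaw ν),
        Tendsto (fun n => mpScale n (lvec n f i)) atTop (𝓝 (L i)) := by
      intro i
      rw [← hΦ.map_eq]
      refine (ae_map_iff hΦ.measurable.aemeasurable ?_).2 (hL.mono fun ω h => h i)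
      exact measurableSet_tendsto _ fun n => (measurable_lvec n i).const_mul _
    rw [ae_all_iff]
    intro i
    by_cases hi : i ∈ Hset r γ (sccOf r o)
    · filter_upwards [ae_of_ae_map hA0 (ae_exists_mem_Hset_of_ae_tendsto htop hX hrow' hr hr' hup
        hlow (hLP i) hi)] with ω hω _ using hω
    · exact Eventually.of_forall fun _ h => absurd h hi
  · intro hH
    refine ⟨limFormula r γ, ae_all_iff.2 fun i => ?_⟩
    refine hΦ.quasiMeasurePreserving.ae (ae_tendsto_limFormula htop hX hr hr' hup hlow ?_)
    exact (ae_map_iff hA0 (measurableSet_of_support fun p =>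
      ∀ k ∈ Hset r γ (sccOf r i), ∃ j ∈ Hset r γ (sccOf r i), p k j)).2 (hH _ (isSCC_sccOf r i))
end
end

section
/- Let B = [[0,-∞,-∞],[0,-∞,-∞],[0,1,1]] and C = [[0,-∞,-∞],[0,-∞,0],[0,0,-∞]] be 3×3 matrices over ℝ_max, and let (A(n))_{n∈ℕ} be i.i.d. random matrices with ℙ(A(n)=B)=p and ℙ(A(n)=C)=1-p, where 0 < p < 1. Then almost surely: x₁(n,0) = 0 for all n (so lim_n (1/n)·x₁(n,0) = 0), max_i x_i(n+1,0) = #{0 ≤ k ≤ n : A(k) = B}, and for i ∈ {2,3}, liminf_n (1/n)·x_i(n,0) = 0 and limsup_n (1/n)·x_i(n,0) = p. In particular (1/n)·x(n,0) almost surely does not converge. -/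
open Filter MeasureTheory ProbabilityTheory Topology

noncomputable section

/-- The matrix `B` of the Bousch–Mairesse example. -/
def exB : Fin 3 → Fin 3 → EReal := ![![0, ⊥, ⊥], ![0, ⊥, ⊥], ![0, 1, 1]]

/-- The matrix `C` of the Bousch–Mairesse example. -/
def exC : Fin 3 → Fin 3 → EReal := ![![0, ⊥, ⊥], ![0, ⊥, 0], ![0, 0, ⊥]]

theorem mpVec_exB (a b c : EReal) : mpVec exB ![a, b, c] = ![a, a, a ⊔ (1 + b) ⊔ (1 + c)] := by
  funext i
  fin_cases i <;> simp [mpVec, exB, iSup_fin_three]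

theorem mpVec_exC (a b c : EReal) : mpVec exC ![a, b, c] = ![a, a ⊔ c, a ⊔ b] := by
  funext i
  fin_cases i <;> simp [mpVec, exC, iSup_fin_three]

theorem exB_ne_exC : exB ≠ exC := by
  intro h
  have := congrFun (congrFun h 2) 1
  simp [exB, exC] at this

open Classical in
/-- The number of indices `k < n` with `f k = B`. -/
def countB (f : ℕ → Fin 3 → Fin 3 → EReal) (n : ℕ) : ℕ :=
  ((Finset.range n).filter (fun k => f k = exB)).card

theorem countB_succ_of_eq {f : ℕ → Fin 3 → Fin 3 → EReal} {n : ℕ} (h : f n = exB) :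
    countB f (n + 1) = countB f n + 1 := by
  simp [countB, Finset.range_add_one, Finset.filter_insert, h]

theorem countB_succ_of_ne {f : ℕ → Fin 3 → Fin 3 → EReal} {n : ℕ} (h : f n ≠ exB) :
    countB f (n + 1) = countB f n := by
  simp [countB, Finset.range_add_one, Finset.filter_insert, h]

theorem EReal.coe_natCast_real_nonneg (m : ℕ) : (0 : EReal) ≤ ((m : ℝ) : EReal) :=
  EReal.coe_nonneg.mpr m.cast_nonneg

theorem mpVec_exB_of_state {v : Fin 3 → EReal} {m : ℕ}
    (hv : v = ![0, 0, ((m : ℝ) : EReal)] ∨ v = ![0, ((m : ℝ) : EReal), 0]) :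
    mpVec exB v = ![0, 0, (((m + 1 : ℕ) : ℝ) : EReal)] := by
  have hm := EReal.coe_natCast_real_nonneg m
  have h1 : (1 : EReal) ≤ 1 + ((m : ℝ) : EReal) := le_add_of_nonneg_right hm
  have h0 : (0 : EReal) ≤ 1 + ((m : ℝ) : EReal) := zero_le_one.trans h1
  have h2 : (((m + 1 : ℕ) : ℝ) : EReal) = 1 + ((m : ℝ) : EReal) := by
    push_cast
    rw [add_comm]
  rw [h2]
  rcases hv with rfl | rfl
  · rw [mpVec_exB, add_zero, sup_eq_right.mpr zero_le_one, sup_eq_right.mpr h1]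
  · rw [mpVec_exB, add_zero, sup_eq_right.mpr h0, sup_eq_left.mpr h1]

theorem mpVec_exC_swap {c : EReal} (hc : 0 ≤ c) : mpVec exC ![0, 0, c] = ![0, c, 0] := by
  rw [mpVec_exC, sup_eq_right.mpr hc, sup_idem]

theorem mpVec_exC_swap' {c : EReal} (hc : 0 ≤ c) : mpVec exC ![0, c, 0] = ![0, 0, c] := by
  rw [mpVec_exC, sup_eq_right.mpr hc, sup_idem]

theorem xvec_state {f : ℕ → Fin 3 → Fin 3 → EReal} (hf : ∀ n, f n = exB ∨ f n = exC) (n : ℕ) :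
    xvec f n = ![0, 0, ((countB f n : ℝ) : EReal)] ∨
      xvec f n = ![0, ((countB f n : ℝ) : EReal), 0] := by
  induction n with
  | zero =>
    left
    funext i
    fin_cases i <;> simp [xvec, countB]
  | succ n ih =>
    rcases hf n with h | h
    · left
      rw [xvec, h, countB_succ_of_eq h, mpVec_exB_of_state ih]
    · have hc := EReal.coe_natCast_real_nonneg (countB f n)
      rw [xvec, h, countB_succ_of_ne (h ▸ exB_ne_exC.symm)]
      rcases ih with ih | ih
      · right
        rw [ih, mpVec_exC_swap hc]
      · left
        rw [ih, mpVec_exC_swap' hc]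

theorem xvec_succ_of_eq_exB {f : ℕ → Fin 3 → Fin 3 → EReal} (hf : ∀ n, f n = exB ∨ f n = exC)
    {n : ℕ} (h : f n = exB) : xvec f (n + 1) = ![0, 0, ((countB f (n + 1) : ℝ) : EReal)] := by
  rw [xvec, h, countB_succ_of_eq h, mpVec_exB_of_state (xvec_state hf n)]

theorem xvec_add_two_of_eq_exB_exC {f : ℕ → Fin 3 → Fin 3 → EReal}
    (hf : ∀ n, f n = exB ∨ f n = exC) {n : ℕ} (h : f n = exB) (h' : f (n + 1) = exC) :
    xvec f (n + 2) = ![0, ((countB f (n + 2) : ℝ) : EReal), 0] := by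
  rw [xvec, h', xvec_succ_of_eq_exB hf h, countB_succ_of_ne (n := n + 1) (h' ▸ exB_ne_exC.symm),
    mpVec_exC_swap (EReal.coe_natCast_real_nonneg _)]

theorem tendsto_natCast_add_div_natCast (a b : ℝ) :
    Tendsto (fun n : ℕ => (a * n + b) / n) atTop (𝓝 a) := by
  have h : Tendsto (fun n : ℕ => a + b / n) atTop (𝓝 (a + 0)) :=
    tendsto_const_nhds.add (tendsto_const_div_atTop_nhds_zero_nat b)
  rw [add_zero] at h
  refine h.congr' ?_
  filter_upwards [eventually_ne_atTop 0] with n hn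
  field_simp

/-- If `B` has a density strictly between `0` and `1`, then `B` is followed by `C` infinitely
often. -/
theorem frequently_exB_exC {f : ℕ → Fin 3 → Fin 3 → EReal} (hf : ∀ n, f n = exB ∨ f n = exC)
    {p : ℝ} (hp : 0 < p) (hp1 : p < 1)
    (hlim : Tendsto (fun n : ℕ => (countB f n : ℝ) / n) atTop (𝓝 p)) :
    ∃ᶠ n in atTop, f n = exB ∧ f (n + 1) = exC := by
  intro hev
  obtain ⟨M, hM⟩ := eventually_atTop.mp hev
  by_cases hB : ∃ m ≥ M, f m = exB
  · obtain ⟨m, hm, hfm⟩ := hB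
    have hall : ∀ k ≥ m, f k = exB := by
      intro k hk
      induction k, hk using Nat.le_induction with
      | base => exact hfm
      | succ k hk ih => exact (hf (k + 1)).resolve_right fun h => hM k (hm.trans hk) ⟨ih, h⟩
    have hcount : ∀ k ≥ m, (countB f k : ℝ) = 1 * k + (countB f m - m) := by
      intro k hk
      induction k, hk using Nat.le_induction with
      | base => ring
      | succ k hk ih =>
        rw [countB_succ_of_eq (hall k hk)]
        push_cast
        rw [ih]
        ring
    refine hp1.ne (tendsto_nhds_unique hlim
      ((tendsto_natCast_add_div_natCast 1 (countB f m - m)).congr' ?_))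
    filter_upwards [eventually_ge_atTop m] with k hk
    rw [hcount k hk]
  · push Not at hB
    have hcount : ∀ k ≥ M, (countB f k : ℝ) = 0 * k + countB f M := by
      intro k hk
      induction k, hk using Nat.le_induction with
      | base => ring
      | succ k hk ih =>
        rw [countB_succ_of_ne (hB k hk), ih]
        ring
    refine hp.ne' (tendsto_nhds_unique hlim
      ((tendsto_natCast_add_div_natCast 0 (countB f M)).congr' ?_))
    filter_upwards [eventually_ge_atTop M] with k hk
    rw [hcount k hk]

theorem liminf_eq_of_frequently_eq {u : ℕ → EReal} {a : EReal} (hle : ∀ n, a ≤ u n)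
    (hfreq : ∃ᶠ n in atTop, u n = a) : liminf u atTop = a :=
  le_antisymm (liminf_le_of_frequently_le (hfreq.mono fun _ h => h.le))
    (le_liminf_of_le (h := Eventually.of_forall hle))

theorem limsup_eq_of_frequently_eq {u w : ℕ → EReal} {a : EReal} (hle : ∀ n, u n ≤ w n)
    (hw : Tendsto w atTop (𝓝 a)) (hfreq : ∃ᶠ n in atTop, u n = w n) : limsup u atTop = a := by
  apply le_antisymm
  · rw [← hw.limsup_eq]
    exact limsup_le_limsup (Eventually.of_forall hle)
  · refine le_of_forall_lt fun c hc => ?_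
    obtain ⟨d, hcd, hda⟩ := exists_between hc
    refine hcd.trans_le (le_limsup_of_frequently_le ?_)
    exact (hfreq.and_eventually (hw.eventually (lt_mem_nhds hda))).mono
      fun n h => h.1 ▸ h.2.le

theorem mpScale_zero (n : ℕ) : mpScale n 0 = 0 := mul_zero _

theorem mpScale_coe (n : ℕ) (r : ℝ) : mpScale n (r : EReal) = ((r / n : ℝ) : EReal) := by
  rw [mpScale, ← EReal.coe_mul, div_eq_inv_mul]

theorem liminf_limsup_mpScale {u : ℕ → EReal} {N : ℕ → ℕ} {p : ℝ}
    (hlim : Tendsto (fun n : ℕ => (N n : ℝ) / n) atTop (𝓝 p))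
    (hu : ∀ n, u n = 0 ∨ u n = ((N n : ℝ) : EReal))
    (hzero : ∃ᶠ n in atTop, u n = 0) (hN : ∃ᶠ n in atTop, u n = ((N n : ℝ) : EReal)) :
    liminf (fun n => mpScale n (u n)) atTop = 0 ∧
      limsup (fun n => mpScale n (u n)) atTop = (p : EReal) := by
  have hnonneg : ∀ n, (0 : EReal) ≤ ((N n / n : ℝ) : EReal) :=
    fun n => EReal.coe_nonneg.mpr (by positivity)
  constructor
  · refine liminf_eq_of_frequently_eq (fun n => ?_) (hzero.mono fun n h => ?_)
    · rcases hu n with h | h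
      · rw [h, mpScale_zero]
      · rw [h, mpScale_coe]
        exact hnonneg n
    · rw [h, mpScale_zero]
  · refine limsup_eq_of_frequently_eq (w := fun n => ((N n / n : ℝ) : EReal)) (fun n => ?_)
      ((continuous_coe_real_ereal.tendsto p).comp hlim) (hN.mono fun n h => ?_)
    · rcases hu n with h | h
      · rw [h, mpScale_zero]
        exact hnonneg n
      · rw [h, mpScale_coe]
    · rw [h, mpScale_coe]

theorem frequently_atTop_of_frequently_add {P Q : ℕ → Prop} (k : ℕ) (hP : ∃ᶠ n in atTop, P n)
    (h : ∀ n, P n → Q (n + k)) : ∃ᶠ n in atTop, Q n :=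
  (tendsto_add_atTop_nat k).frequently (hP.mono h)

theorem liminf_limsup_xvec {f : ℕ → Fin 3 → Fin 3 → EReal} (hf : ∀ n, f n = exB ∨ f n = exC)
    {p : ℝ} (hp : 0 < p) (hp1 : p < 1)
    (hlim : Tendsto (fun n : ℕ => (countB f n : ℝ) / n) atTop (𝓝 p)) {i : Fin 3} (hi : i ≠ 0) :
    liminf (fun n => mpScale n (xvec f n i)) atTop = 0 ∧
      limsup (fun n => mpScale n (xvec f n i)) atTop = (p : EReal) := by
  have hfreq := frequently_exB_exC hf hp hp1 hlim
  have hright : ∃ᶠ n in atTop, xvec f n = ![0, 0, ((countB f n : ℝ) : EReal)] :=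
    frequently_atTop_of_frequently_add 1 hfreq fun n h => xvec_succ_of_eq_exB hf h.1
  have hleft : ∃ᶠ n in atTop, xvec f n = ![0, ((countB f n : ℝ) : EReal), 0] :=
    frequently_atTop_of_frequently_add 2 hfreq fun n h => xvec_add_two_of_eq_exB_exC hf h.1 h.2
  have hstate := xvec_state hf
  fin_cases i
  · exact absurd rfl hi
  · refine liminf_limsup_mpScale hlim (fun n => ?_) (hright.mono fun n h => ?_)
      (hleft.mono fun n h => ?_)
    · exact (hstate n).imp (fun h => by simp [h]) (fun h => by simp [h])
    · simp [h]
    · simp [h]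
  · refine liminf_limsup_mpScale hlim (fun n => ?_) (hleft.mono fun n h => ?_)
      (hright.mono fun n h => ?_)
    · exact (hstate n).symm.imp (fun h => by simp [h]) (fun h => by simp [h])
    · simp [h]
    · simp [h]

theorem iSup_xvec {f : ℕ → Fin 3 → Fin 3 → EReal} (hf : ∀ n, f n = exB ∨ f n = exC) (n : ℕ) :
    ⨆ i, xvec f n i = ((countB f n : ℝ) : EReal) := by
  rw [iSup_fin_three]
  rcases xvec_state hf n with h | h <;> rw [h] <;> simp

theorem xvec_apply_zero {f : ℕ → Fin 3 → Fin 3 → EReal} (hf : ∀ n, f n = exB ∨ f n = exC)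
    (n : ℕ) : xvec f n 0 = 0 := by
  rcases xvec_state hf n with h | h <;> simp [h]

theorem ae_eq_exB_or_exC {Ω : Type*} [MeasurableSpace Ω] {μ : Measure Ω} [IsProbabilityMeasure μ]
    {p : ℝ} (hp : 0 ≤ p) (hp1 : p ≤ 1) {X : Ω → Fin 3 → Fin 3 → EReal} (hX : Measurable X)
    (hB : μ {ω | X ω = exB} = ENNReal.ofReal p)
    (hC : μ {ω | X ω = exC} = ENNReal.ofReal (1 - p)) :
    ∀ᵐ ω ∂μ, X ω = exB ∨ X ω = exC := by
  have hmB : MeasurableSet {ω | X ω = exB} := hX (measurableSet_singleton exB)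
  have hmC : MeasurableSet {ω | X ω = exC} := hX (measurableSet_singleton exC)
  have hdisj : Disjoint {ω | X ω = exB} {ω | X ω = exC} :=
    Set.disjoint_left.mpr fun ω h h' => exB_ne_exC (h.symm.trans h')
  have hunion : μ ({ω | X ω = exB} ∪ {ω | X ω = exC}) = 1 := by
    rw [measure_union hdisj hmC, hB, hC, ← ENNReal.ofReal_add hp (sub_nonneg.mpr hp1)]
    simp
  exact (mem_ae_iff_prob_eq_one (hmB.union hmC)).mpr hunion

/-- Law of large numbers for the visits of a sequence of independent random variables
to a fixed measurable set. -/
theorem ae_tendsto_sum_indicator_div {Ω E : Type*} [MeasurableSpace Ω] [MeasurableSpace E]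
    {μ : Measure Ω} [IsProbabilityMeasure μ] {X : ℕ → Ω → E} (hX : ∀ n, Measurable (X n))
    (hindep : iIndepFun X μ) {s : Set E} (hs : MeasurableSet s) {p : ℝ} (hp : 0 ≤ p)
    (hμ : ∀ n, μ (X n ⁻¹' s) = ENNReal.ofReal p) :
    ∀ᵐ ω ∂μ, Tendsto (fun n : ℕ => (∑ k ∈ Finset.range n, s.indicator (1 : E → ℝ) (X k ω)) / n)
      atTop (𝓝 p) := by
  have hg : Measurable (s.indicator (1 : E → ℝ)) := measurable_one.indicator hs
  have hcomp : ∀ n, (fun ω => s.indicator (1 : E → ℝ) (X n ω)) = (X n ⁻¹' s).indicator 1 :=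
    fun n => rfl
  have hmean : ∫ ω, s.indicator (1 : E → ℝ) (X 0 ω) ∂μ = p := by
    rw [hcomp, integral_indicator_one (hX 0 hs), measureReal_def, hμ, ENNReal.toReal_ofReal hp]
  have hint : Integrable (fun ω => s.indicator (1 : E → ℝ) (X 0 ω)) μ := by
    rw [hcomp]
    exact (integrable_const (1 : ℝ)).indicator (hX 0 hs)
  have hident : ∀ n, IdentDistrib (fun ω => s.indicator (1 : E → ℝ) (X n ω))
      (fun ω => s.indicator (1 : E → ℝ) (X 0 ω)) μ μ := by
    intro n
    refine ⟨(hg.comp (hX n)).aemeasurable, (hg.comp (hX 0)).aemeasurable, ?_⟩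
    ext t ht
    rw [Measure.map_apply (by exact hg.comp (hX n)) ht,
      Measure.map_apply (by exact hg.comp (hX 0)) ht, hcomp, hcomp]
    have hcompl : μ (X n ⁻¹' s)ᶜ = μ (X 0 ⁻¹' s)ᶜ := by
      rw [prob_compl_eq_one_sub (hX n hs), prob_compl_eq_one_sub (hX 0 hs), hμ, hμ]
    classical
    simp only [Pi.one_def, Set.indicator_const_preimage_eq_union]
    by_cases h1 : (1 : ℝ) ∈ t <;> by_cases h0 : (0 : ℝ) ∈ t <;> simp [h0, h1, hμ, hcompl]
  have hlaw := strong_law_ae_real (fun n ω => s.indicator (1 : E → ℝ) (X n ω)) hint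
    (fun i j hij => (hindep.indepFun hij).comp hg hg) hident
  rwa [hmean] at hlaw

theorem sum_indicator_exB (f : ℕ → Fin 3 → Fin 3 → EReal) (n : ℕ) :
    ∑ k ∈ Finset.range n, ({exB} : Set _).indicator (1 : (Fin 3 → Fin 3 → EReal) → ℝ) (f k) =
      countB f n := by
  classical
  simp only [Set.indicator_apply, Set.mem_singleton_iff, Pi.one_apply, Finset.sum_boole, countB]

open Classical in
/-- **Example (Bousch–Mairesse: independence is not sufficient).**
Let `(A(n))_{n∈ℕ}` be i.i.d. taking the values `B` and `C` with probabilities `p` and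
`1 - p`, `0 < p < 1`. Then almost surely: `x₁(n,0) = 0` for all `n` (so
`(1/n) x₁(n,0) → 0`), `max_i x_i(n+1,0) = #{0 ≤ k ≤ n : A(k) = B}`, and for `i ∈ {2,3}`,
`liminf (1/n) x_i(n,0) = 0` and `limsup (1/n) x_i(n,0) = p`; in particular `(1/n) x(n,0)`
a.s. does not converge. -/
theorem bousch_mairesse_example
    {Ω : Type*} [MeasurableSpace Ω] (μ : Measure Ω) [IsProbabilityMeasure μ]
    (p : ℝ) (hp : 0 < p) (hp1 : p < 1)
    (A : ℕ → Ω → Fin 3 → Fin 3 → EReal)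
    (hmeas : ∀ n, Measurable (A n))
    (hindep : iIndepFun A μ)
    (hB : ∀ n, μ {ω | A n ω = exB} = ENNReal.ofReal p)
    (hC : ∀ n, μ {ω | A n ω = exC} = ENNReal.ofReal (1 - p)) :
    ∀ᵐ ω ∂μ,
      (∀ n, xvec (fun m => A m ω) n 0 = 0) ∧
      Tendsto (fun n => mpScale n (xvec (fun m => A m ω) n 0)) atTop (𝓝 (0 : EReal)) ∧
      (∀ n, (⨆ i, xvec (fun m => A m ω) (n + 1) i) =
        ((((Finset.range (n + 1)).filter (fun k => A k ω = exB)).card : ℝ) : EReal)) ∧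
      (∀ i : Fin 3, i ≠ 0 →
        Filter.liminf (fun n => mpScale n (xvec (fun m => A m ω) n i)) atTop = (0 : EReal) ∧
        Filter.limsup (fun n => mpScale n (xvec (fun m => A m ω) n i)) atTop = ((p : ℝ) : EReal)) ∧
      ¬ (∀ i : Fin 3, ∃ l : EReal,
        Tendsto (fun n => mpScale n (xvec (fun m => A m ω) n i)) atTop (𝓝 l)) := by
  have hvalues : ∀ᵐ ω ∂μ, ∀ n, A n ω = exB ∨ A n ω = exC :=
    ae_all_iff.mpr fun n => ae_eq_exB_or_exC hp.le hp1.le (hmeas n) (hB n) (hC n)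
  filter_upwards [hvalues,
    ae_tendsto_sum_indicator_div hmeas hindep (measurableSet_singleton exB) hp.le hB]
    with ω hf hsum
  have hlim : Tendsto (fun n : ℕ => (countB (fun m => A m ω) n : ℝ) / n) atTop (𝓝 p) := by
    simpa only [sum_indicator_exB (fun m => A m ω)] using hsum
  have hzero := xvec_apply_zero (f := fun m => A m ω) hf
  refine ⟨hzero, ?_, fun n => iSup_xvec (f := fun m => A m ω) hf (n + 1),
    fun i hi => liminf_limsup_xvec hf hp hp1 hlim hi, fun hconv => ?_⟩
  · simp only [hzero, mpScale_zero]
    exact tendsto_const_nhds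
  · obtain ⟨l, hl⟩ := hconv 1
    obtain ⟨hinf, hsup⟩ := liminf_limsup_xvec hf hp hp1 hlim one_ne_zero
    rw [hl.liminf_eq] at hinf
    rw [hl.limsup_eq, hinf] at hsup
    exact hp.ne (EReal.coe_injective hsup)
end
end
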